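/- arXiv:2402.10282 — 3 statements merged into one kernel-verified Lean document; each statement's English description precedes it below -/
import Mathlib

section
/- In the two-policy mediator feedback problem with Θ = {θ₁, θ₂}, for any algorithm and any horizon T ≥ 1/(8 log(4/3) H²(θ₁,θ₂)), there exists a sequence of losses such that the regret satisfies R_T ≥ (1/(13√2))·√(C(θ₁,θ₂) T), where C(θ₁,θ₂) is the chi-squared capacity of the pair. -/
open Finset

noncomputable section

/-- The history (policy, outcome, observed loss) available before round `t`, given the
realized loss sequence `L` (Boolean losses) and the sequence `h` of (policy, outcome)
pairs. -/
def medHist {ι X : Type*} {T : ℕ} (L : Fin T → X → Bool) (h : Fin T → ι × X)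
    (t : ℕ) : List (ι × X × ℝ) :=
  (List.ofFn fun s : Fin T =>
      ((h s).1, (h s).2, if L s (h s).2 then (1 : ℝ) else 0)).take t

/-- The conditional probability of the (policy, outcome) sequence `h` given the loss
sequence `L`, when the learner plays strategy `alg` (a distribution over policies given
the observed history) and, after choosing a policy, an outcome is drawn from the chosen
policy's distribution `θ`. -/
def medProb {ι X : Type*} [Fintype ι] [Fintype X] {T : ℕ}
    (alg : ℕ → List (ι × X × ℝ) → ι → ℝ) (θ : ι → X → ℝ)
    (L : Fin T → X → Bool) (h : Fin T → ι × X) : ℝ :=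
  ∏ t : Fin T, alg t (medHist L h t) (h t).1 * θ (h t).1 (h t).2

/-! With `D = 2H²(θ₀, θ₁)`, let `f = (√θ₀ - √θ₁) / (√θ₀ + √θ₁)` and let outcome `x` have an
independent Bernoulli loss of mean `1/2 ± s f(x)` in every round. The gap between the two policies
is then `s D` in either environment, the sign deciding which policy is better, while one round
reveals little: as `θᵢ f² ≤ (√θ₀ - √θ₁)²`, the observations of the two environments have
Bhattacharyya coefficient at least `1 - (8/3) s² D`. The coefficient of the laws of the whole
transcript is thus at least `1 - (8/3) s² D T` (chain rule and Bernoulli's inequality), and Le Cam's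
inequality bounds their overlap `∑ min(P, Q)` below. Since every round errs in one of the two
environments, the two regrets add up to at least `s D T ∑ min(P, Q)`. Take `s = 1 / (5 √(D T))`
and use `C ≤ D`. -/

section ProductLaw

variable {α β : Type*} [Fintype α] [DecidableEq α] [Fintype β] {p : α → β → ℝ}

theorem sum_prod_apply_eq_one (hp : ∀ a, ∑ b, p a b = 1) :
    ∑ f : α → β, ∏ a, p a (f a) = 1 := by
  rw [← Fintype.prod_sum]
  exact prod_eq_one fun a _ => hp a

theorem sum_prod_apply_mul (hp : ∀ a, ∑ b, p a b = 1) (a₀ : α) (φ : β → ℝ) :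
    ∑ f : α → β, (∏ a, p a (f a)) * φ (f a₀) = ∑ b, p a₀ b * φ b := by
  have absorb (f : α → β) : (∏ a, p a (f a)) * φ (f a₀) =
      ∏ a, p a (f a) * if a = a₀ then φ (f a) else 1 := by
    rw [prod_mul_distrib, prod_ite_eq' univ a₀, if_pos (mem_univ a₀)]
  simp_rw [absorb]
  rw [← Fintype.prod_sum fun a b => p a b * if a = a₀ then φ b else 1,
    Fintype.prod_eq_single a₀ fun a ha => by simp [ha, hp]]
  simp

end ProductLaw

section SequentialLaw

theorem sum_fin_succ_arrow {J : Type*} [Fintype J] {n : ℕ} (F : (Fin (n + 1) → J) → ℝ) :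
    ∑ ω, F ω = ∑ j, ∑ ω : Fin n → J, F (Fin.cons j ω) := by
  rw [← (Fin.consEquiv fun _ : Fin (n + 1) => J).sum_comp, Fintype.sum_prod_type]
  rfl

/-- The probability of the path `ω` when each letter is drawn from `K l`, `l` being the list of the
letters drawn before it, oldest first. -/
def seqLaw {J : Type*} (K : List J → J → ℝ) {n : ℕ} (ω : Fin n → J) : ℝ :=
  ∏ t : Fin n, K ((List.ofFn ω).take t) (ω t)

variable {J J' : Type*} {K K' : List J → J → ℝ} {n : ℕ}

theorem seqLaw_cons (K : List J → J → ℝ) (j : J) (ω : Fin n → J) :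
    seqLaw K (Fin.cons j ω : Fin (n + 1) → J) = K [] j * seqLaw (fun l => K (j :: l)) ω := by
  simp [seqLaw, Fin.prod_univ_succ, List.ofFn_succ]

theorem seqLaw_nonneg (hK : ∀ l j, 0 ≤ K l j) (ω : Fin n → J) : 0 ≤ seqLaw K ω :=
  prod_nonneg fun _ _ => hK _ _

variable [Fintype J] [Fintype J']

theorem sum_seqLaw (hK : ∀ l, ∑ j, K l j = 1) : ∑ ω : Fin n → J, seqLaw K ω = 1 := by
  induction n generalizing K with
  | zero => simp [seqLaw]
  | succ n ih =>
    simp_rw [sum_fin_succ_arrow, seqLaw_cons, ← mul_sum, ih fun l => hK (_ :: l), mul_one, hK]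

theorem sum_seqLaw_mul_sum_succ (hK : ∀ l, ∑ j, K l j = 1) (g : J → ℝ) :
    ∑ ω : Fin (n + 1) → J, seqLaw K ω * ∑ t, g (ω t) =
      ∑ j, K [] j * g j +
        ∑ j, K [] j * ∑ ω : Fin n → J, seqLaw (fun l => K (j :: l)) ω * ∑ t, g (ω t) := by
  rw [sum_fin_succ_arrow, ← sum_add_distrib]
  refine sum_congr rfl fun j _ => ?_
  simp_rw [seqLaw_cons, Fin.sum_univ_succ, Fin.cons_zero, Fin.cons_succ, mul_assoc, mul_add,
    sum_add_distrib, ← mul_sum, ← sum_mul, sum_seqLaw fun l => hK (j :: l), one_mul]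

-- The cost `g` need not factor through `π`: only its conditional mean given the past matters.
theorem sum_seqLaw_mul_sum_eq_of_map {L : List J' → J' → ℝ} (π : J → J')
    (hL : ∀ l, ∑ j, L l j = 1)
    (hmap : ∀ l (φ : J' → ℝ), ∑ j, K l j * φ (π j) = ∑ j, L (l.map π) j * φ j)
    {g : J → ℝ} {g' : J' → ℝ} (hg : ∀ l, ∑ j, K l j * g j = ∑ j, L (l.map π) j * g' j) :
    ∑ ω : Fin n → J, seqLaw K ω * ∑ t, g (ω t) =
      ∑ ω : Fin n → J', seqLaw L ω * ∑ t, g' (ω t) := by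
  induction n generalizing K L with
  | zero => simp
  | succ n ih =>
    have hK (l : List J) : ∑ j, K l j = 1 := by simpa [hL] using hmap l 1
    rw [sum_seqLaw_mul_sum_succ hK, sum_seqLaw_mul_sum_succ hL]
    refine congrArg₂ (· + ·) (hg []) ((sum_congr rfl fun j _ => ?_).trans (hmap [] _))
    rw [ih (fun l => hL (π j :: l)) (fun l => hmap (j :: l)) fun l => hg (j :: l)]

theorem pow_le_sum_sqrt_seqLaw_mul {q : ℝ} (hq : 0 ≤ q) (hK : ∀ l j, 0 ≤ K l j)
    (hK' : ∀ l j, 0 ≤ K' l j) (hqK : ∀ l, q ≤ ∑ j, √(K l j * K' l j)) :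
    q ^ n ≤ ∑ ω : Fin n → J, √(seqLaw K ω * seqLaw K' ω) := by
  induction n generalizing K K' with
  | zero => simp [seqLaw]
  | succ n ih =>
    calc q ^ (n + 1) = q * q ^ n := pow_succ' q n
      _ ≤ (∑ j, √(K [] j * K' [] j)) * q ^ n := by gcongr; exact hqK []
      _ ≤ ∑ j, √(K [] j * K' [] j) *
            ∑ ω : Fin n → J,
              √(seqLaw (fun l => K (j :: l)) ω * seqLaw (fun l => K' (j :: l)) ω) := by
        rw [sum_mul]
        gcongr with j
        exact ih (fun l => hK (j :: l)) (fun l => hK' (j :: l)) fun l => hqK (j :: l)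
      _ = ∑ ω : Fin (n + 1) → J, √(seqLaw K ω * seqLaw K' ω) := by
        simp_rw [sum_fin_succ_arrow, seqLaw_cons, mul_mul_mul_comm (K [] _),
          Real.sqrt_mul (mul_nonneg (hK [] _) (hK' [] _)), mul_sum]

end SequentialLaw

section Overlap

variable {Ω : Type*} [Fintype Ω] {P Q : Ω → ℝ}

theorem sq_sum_sqrt_mul_le_sum_min_mul_sum_max (hP : ∀ ω, 0 ≤ P ω) (hQ : ∀ ω, 0 ≤ Q ω) :
    (∑ ω, √(P ω * Q ω)) ^ 2 ≤ (∑ ω, min (P ω) (Q ω)) * ∑ ω, max (P ω) (Q ω) :=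
  sum_sq_le_sum_mul_sum_of_sq_le_mul _ (fun ω _ => le_min (hP ω) (hQ ω))
    (fun ω _ => le_max_of_le_left (hP ω)) fun ω _ => by
      rw [Real.sq_sqrt (mul_nonneg (hP ω) (hQ ω)), min_mul_max]

theorem sq_sum_sqrt_mul_le (hP : ∀ ω, 0 ≤ P ω) (hQ : ∀ ω, 0 ≤ Q ω) (hP1 : ∑ ω, P ω = 1)
    (hQ1 : ∑ ω, Q ω = 1) :
    (∑ ω, √(P ω * Q ω)) ^ 2 ≤ (∑ ω, min (P ω) (Q ω)) * (2 - ∑ ω, min (P ω) (Q ω)) := by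
  have sum_max : ∑ ω, max (P ω) (Q ω) = 2 - ∑ ω, min (P ω) (Q ω) := by
    rw [eq_sub_iff_add_eq', ← sum_add_distrib]
    simp_rw [min_add_max, sum_add_distrib, hP1, hQ1]
    norm_num
  exact sum_max ▸ sq_sum_sqrt_mul_le_sum_min_mul_sum_max hP hQ

theorem mul_sum_min_le {F G : Ω → ℝ} {c : ℝ} (hF : ∀ ω, 0 ≤ F ω) (hG : ∀ ω, 0 ≤ G ω)
    (hFG : ∀ ω, F ω + G ω = c) :
    c * ∑ ω, min (P ω) (Q ω) ≤ ∑ ω, P ω * F ω + ∑ ω, Q ω * G ω := by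
  rw [mul_sum, ← sum_add_distrib]
  refine sum_le_sum fun ω _ => ?_
  rw [← hFG ω, add_mul, mul_comm (P ω), mul_comm (Q ω)]
  exact add_le_add (mul_le_mul_of_nonneg_left (min_le_left _ _) (hF ω))
    (mul_le_mul_of_nonneg_left (min_le_right _ _) (hG ω))

end Overlap

section HellingerScore

/-- The score `(√a - √b) / (√a + √b)`: the hard environments shift the mean loss of an outcome of
masses `a` and `b` along it. It is `0` when both masses vanish. -/
def hellingerScore (a b : ℝ) : ℝ := (√a - √b) / (√a + √b)

theorem sq_hellingerScore_le_one (a b : ℝ) : hellingerScore a b ^ 2 ≤ 1 := by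
  rw [hellingerScore, div_pow]
  refine div_le_one_of_le₀ ?_ (sq_nonneg _)
  nlinarith [mul_nonneg (Real.sqrt_nonneg a) (Real.sqrt_nonneg b)]

theorem sub_mul_hellingerScore {a b : ℝ} (ha : 0 ≤ a) (hb : 0 ≤ b) :
    (a - b) * hellingerScore a b = (√a - √b) ^ 2 := by
  have factor : a - b = (√a + √b) * (√a - √b) := by
    rw [← sq_sub_sq, Real.sq_sqrt ha, Real.sq_sqrt hb]
  rw [hellingerScore, factor]
  rcases eq_or_ne (√a + √b) 0 with h | h
  · have ha0 : √a = 0 := by linarith [Real.sqrt_nonneg a, Real.sqrt_nonneg b]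
    have hb0 : √b = 0 := by linarith
    simp [ha0, hb0]
  · field_simp

theorem max_mul_sq_hellingerScore_le {a b : ℝ} (ha : 0 ≤ a) (hb : 0 ≤ b) :
    max a b * hellingerScore a b ^ 2 ≤ (√a - √b) ^ 2 := by
  have max_le : max a b ≤ (√a + √b) ^ 2 := by
    have := mul_nonneg (Real.sqrt_nonneg a) (Real.sqrt_nonneg b)
    rw [add_sq, Real.sq_sqrt ha, Real.sq_sqrt hb]
    exact max_le (by linarith) (by linarith)
  rw [hellingerScore, div_pow, ← mul_div_assoc]
  refine div_le_of_le_mul₀ (sq_nonneg _) (sq_nonneg _) ?_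
  rw [mul_comm]
  exact mul_le_mul_of_nonneg_left max_le (sq_nonneg _)

end HellingerScore

section Hellinger

variable {X : Type*} [Fintype X] {u v : X → ℝ}

/-- The squared Hellinger distance between the mass functions `u` and `v`. -/
def sqHellinger (u v : X → ℝ) : ℝ := 1 / 2 * ∑ x, (√(u x) - √(v x)) ^ 2

/-- The chi-squared capacity of the pair `u`, `v` of mass functions. A summand whose denominator
vanishes counts as `0`. -/
def chiSqCapacity (u v : X → ℝ) : ℝ :=
  sSup ((fun r : ℝ => r * (1 - r) * ∑ x, (u x - v x) ^ 2 / (r * u x + (1 - r) * v x)) ''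
    Set.Icc 0 1)

theorem sqHellinger_nonneg (u v : X → ℝ) : 0 ≤ sqHellinger u v := by
  unfold sqHellinger
  positivity

theorem sqHellinger_le_one (hu : ∀ x, 0 ≤ u x) (hv : ∀ x, 0 ≤ v x) (hu1 : ∑ x, u x = 1)
    (hv1 : ∑ x, v x = 1) : sqHellinger u v ≤ 1 := by
  have pointwise (x : X) : (√(u x) - √(v x)) ^ 2 ≤ u x + v x := by
    nlinarith [Real.sq_sqrt (hu x), Real.sq_sqrt (hv x),
      mul_nonneg (Real.sqrt_nonneg (u x)) (Real.sqrt_nonneg (v x))]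
  have := sum_le_sum fun x (_ : x ∈ univ) => pointwise x
  rw [sum_add_distrib, hu1, hv1] at this
  unfold sqHellinger
  linarith

theorem mul_one_sub_mul_sq_sub_div_le {r a b : ℝ} (hr0 : 0 ≤ r) (hr1 : r ≤ 1) (ha : 0 ≤ a)
    (hb : 0 ≤ b) :
    r * (1 - r) * ((a - b) ^ 2 / (r * a + (1 - r) * b)) ≤ (√a - √b) ^ 2 := by
  have : 0 ≤ 1 - r := sub_nonneg.2 hr1
  rw [← mul_div_assoc]
  refine div_le_of_le_mul₀ (by positivity) (sq_nonneg _) ?_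
  have key : r * (1 - r) * (√a ^ 2 - √b ^ 2) ^ 2 ≤
      (√a - √b) ^ 2 * (r * √a ^ 2 + (1 - r) * √b ^ 2) := by
    nlinarith [mul_nonneg (sq_nonneg (√a - √b)) (sq_nonneg (r * √a - (1 - r) * √b))]
  rwa [Real.sq_sqrt ha, Real.sq_sqrt hb] at key

theorem chiSqCapacity_le_two_mul_sqHellinger (hu : ∀ x, 0 ≤ u x) (hv : ∀ x, 0 ≤ v x) :
    chiSqCapacity u v ≤ 2 * sqHellinger u v := by
  refine csSup_le (Set.Nonempty.image _ ⟨0, by simp⟩) ?_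
  rintro _ ⟨r, ⟨hr0, hr1⟩, rfl⟩
  rw [sqHellinger, ← mul_assoc, mul_one_div_cancel two_ne_zero, one_mul]
  refine (mul_sum ..).trans_le ?_
  exact sum_le_sum fun x _ => mul_one_sub_mul_sq_sub_div_le hr0 hr1 (hu x) (hv x)

theorem sum_mul_hellingerScore_sub (hu : ∀ x, 0 ≤ u x) (hv : ∀ x, 0 ≤ v x) :
    ∑ x, u x * hellingerScore (u x) (v x) - ∑ x, v x * hellingerScore (u x) (v x) =
      2 * sqHellinger u v := by
  simp_rw [← sum_sub_distrib, ← sub_mul, sub_mul_hellingerScore (hu _) (hv _), sqHellinger]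
  ring

end Hellinger

section BiasedCoin

/-- The Bernoulli law of mean `1 / 2 + δ` on `Bool`. -/
def biasedCoin (δ : ℝ) (b : Bool) : ℝ := if b then 1 / 2 + δ else 1 / 2 - δ

theorem sum_biasedCoin (δ : ℝ) : ∑ b, biasedCoin δ b = 1 := by
  simp [biasedCoin, ← two_mul]

theorem biasedCoin_nonneg {δ : ℝ} (hδ : |δ| ≤ 1 / 2) (b : Bool) : 0 ≤ biasedCoin δ b := by
  obtain ⟨hl, hu⟩ := abs_le.1 hδ
  cases b <;> simp only [biasedCoin] <;> grind

theorem one_sub_le_sum_sqrt_biasedCoin_mul {δ : ℝ} (hδ : δ ^ 2 ≤ 3 / 16) :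
    1 - 8 / 3 * δ ^ 2 ≤ ∑ b, √(biasedCoin δ b * biasedCoin (-δ) b) := by
  have prod_eq (b : Bool) : biasedCoin δ b * biasedCoin (-δ) b = 1 / 4 - δ ^ 2 := by
    cases b <;> simp [biasedCoin] <;> ring
  have half_le : (1 - 8 / 3 * δ ^ 2) / 2 ≤ √(1 / 4 - δ ^ 2) :=
    Real.le_sqrt_of_sq_le (by nlinarith [sq_nonneg δ])
  rw [Fintype.sum_bool, prod_eq, prod_eq]
  linarith

end BiasedCoin

section Regret

variable {ι X : Type*} {T : ℕ} {alg : ℕ → List (ι × X × ℝ) → ι → ℝ} {θ : ι → X → ℝ}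
  {p : X → Bool → ℝ}

/-- The law of the learner's next policy after the observations `l`, a list of
(policy, outcome, loss) triples. -/
def policyLaw (alg : ℕ → List (ι × X × ℝ) → ι → ℝ) (l : List (ι × X × Bool)) : ι → ℝ :=
  alg l.length (l.map fun o => (o.1, o.2.1, if o.2.2 then (1 : ℝ) else 0))

/-- The law of the next (policy, outcome, loss) triple after the observations `l`. -/
def obsKernel (alg : ℕ → List (ι × X × ℝ) → ι → ℝ) (θ : ι → X → ℝ) (p : X → Bool → ℝ)
    (l : List (ι × X × Bool)) (o : ι × X × Bool) : ℝ :=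
  policyLaw alg l o.1 * θ o.1 o.2.1 * p o.2.1 o.2.2

/-- What the learner sees of a round: the loss of the drawn outcome only. -/
def observe (r : (X → Bool) × ι × X) : ι × X × Bool := (r.2.1, r.2.2, r.1 r.2.2)

theorem obsKernel_nonneg (halg : ∀ t l i, 0 ≤ alg t l i) (hθ : ∀ i x, 0 ≤ θ i x)
    (hp : ∀ x b, 0 ≤ p x b) (l : List (ι × X × Bool)) (o : ι × X × Bool) :
    0 ≤ obsKernel alg θ p l o :=
  mul_nonneg (mul_nonneg (halg _ _ _) (hθ _ _)) (hp _ _)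

variable [Fintype X]

/-- The mean loss of a policy with outcome law `u` when outcome `x` has loss law `p x`. -/
def meanLoss (u : X → ℝ) (p : X → Bool → ℝ) : ℝ := ∑ x, u x * p x true

/-- The law of a sequence of losses that are independent over rounds and outcomes, the loss of
outcome `x` having law `p x`. -/
def lossSeqLaw (p : X → Bool → ℝ) (L : Fin T → X → Bool) : ℝ := ∏ t, ∏ x, p x (L t x)

/-- The law of the next round, including the losses of the outcomes that are not drawn. -/
def roundKernel (alg : ℕ → List (ι × X × ℝ) → ι → ℝ) (θ : ι → X → ℝ) (p : X → Bool → ℝ)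
    (l : List ((X → Bool) × ι × X)) (r : (X → Bool) × ι × X) : ℝ :=
  (∏ x, p x (r.1 x)) * (policyLaw alg (l.map observe) r.2.1 * θ r.2.1 r.2.2)

theorem lossSeqLaw_nonneg (hp : ∀ x b, 0 ≤ p x b) (L : Fin T → X → Bool) : 0 ≤ lossSeqLaw p L :=
  prod_nonneg fun _ _ => prod_nonneg fun _ _ => hp _ _

variable [Fintype ι]

/-- The expected regret of the learner `alg` when the losses have law `w`. -/
def mediatorRegret [Nonempty ι] [DecidableEq X] (alg : ℕ → List (ι × X × ℝ) → ι → ℝ)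
    (θ : ι → X → ℝ) (w : (Fin T → X → Bool) → ℝ) : ℝ :=
  (∑ L, w L * ∑ h : Fin T → ι × X, medProb alg θ L h *
      ∑ t : Fin T, ∑ a, θ (h t).1 a * (if L t a then (1 : ℝ) else 0)) -
    univ.inf' univ_nonempty fun i : ι =>
      ∑ L, w L * ∑ t : Fin T, ∑ a, θ i a * (if L t a then (1 : ℝ) else 0)

theorem lossSeqLaw_mul_medProb (L : Fin T → X → Bool) (h : Fin T → ι × X) :
    lossSeqLaw p L * medProb alg θ L h =
      seqLaw (roundKernel alg θ p) fun t => (L t, h t) := by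
  rw [lossSeqLaw, medProb, seqLaw, ← prod_mul_distrib]
  refine prod_congr rfl fun t _ => ?_
  simp [roundKernel, policyLaw, medHist, List.map_take, List.map_ofFn, observe,
    Function.comp_def]

theorem sum_obsKernel_mul (l : List (ι × X × Bool)) (φ : ι × X × Bool → ℝ) :
    ∑ o, obsKernel alg θ p l o * φ o =
      ∑ i, ∑ x, policyLaw alg l i * θ i x * ∑ b, p x b * φ (i, x, b) := by
  simp_rw [Fintype.sum_prod_type, obsKernel, mul_sum, mul_assoc]

theorem sum_obsKernel (halg : ∀ t l, ∑ i, alg t l i = 1) (hθ : ∀ i, ∑ x, θ i x = 1)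
    (hp : ∀ x, ∑ b, p x b = 1) (l : List (ι × X × Bool)) : ∑ o, obsKernel alg θ p l o = 1 := by
  have := sum_obsKernel_mul (alg := alg) (θ := θ) (p := p) l 1
  simp_rw [Pi.one_apply, mul_one, hp, mul_one, ← mul_sum, hθ, mul_one] at this
  exact this.trans (halg _ _)

theorem sum_sqrt_obsKernel_mul {p' : X → Bool → ℝ} (halg : ∀ t l i, 0 ≤ alg t l i)
    (hθ : ∀ i x, 0 ≤ θ i x) (l : List (ι × X × Bool)) :
    ∑ o, √(obsKernel alg θ p l o * obsKernel alg θ p' l o) =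
      ∑ i, policyLaw alg l i * ∑ x, θ i x * ∑ b, √(p x b * p' x b) := by
  simp_rw [Fintype.sum_prod_type, mul_sum]
  refine sum_congr rfl fun i _ => sum_congr rfl fun x _ => sum_congr rfl fun b _ => ?_
  have hiθ : 0 ≤ policyLaw alg l i * θ i x := mul_nonneg (halg _ _ _) (hθ _ _)
  rw [obsKernel, obsKernel, mul_mul_mul_comm, Real.sqrt_mul (mul_self_nonneg _),
    Real.sqrt_mul_self hiθ, mul_assoc]

theorem pow_le_sum_sqrt_seqLaw_obsKernel_mul {p' : X → Bool → ℝ} {q : ℝ} (hq : 0 ≤ q)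
    (halg : ∀ t l, (∀ i, 0 ≤ alg t l i) ∧ ∑ i, alg t l i = 1) (hθ : ∀ i x, 0 ≤ θ i x)
    (hp : ∀ x b, 0 ≤ p x b) (hp' : ∀ x b, 0 ≤ p' x b)
    (hqθ : ∀ i, q ≤ ∑ x, θ i x * ∑ b, √(p x b * p' x b)) :
    q ^ T ≤ ∑ ω : Fin T → ι × X × Bool,
      √(seqLaw (obsKernel alg θ p) ω * seqLaw (obsKernel alg θ p') ω) := by
  have halg0 t l := (halg t l).1
  refine pow_le_sum_sqrt_seqLaw_mul hq (obsKernel_nonneg halg0 hθ hp)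
    (obsKernel_nonneg halg0 hθ hp') fun l => ?_
  rw [sum_sqrt_obsKernel_mul halg0 hθ]
  calc q = ∑ i, policyLaw alg l i * q := by rw [← sum_mul, policyLaw, (halg _ _).2, one_mul]
    _ ≤ _ := sum_le_sum fun i _ => mul_le_mul_of_nonneg_left (hqθ i) (halg0 _ _ i)

variable [DecidableEq X]

theorem sum_lossSeqLaw (hp : ∀ x, ∑ b, p x b = 1) :
    ∑ L : Fin T → X → Bool, lossSeqLaw p L = 1 :=
  sum_prod_apply_eq_one fun _ => sum_prod_apply_eq_one hp

theorem sum_prod_mul_loss_eq_meanLoss (hp : ∀ x, ∑ b, p x b = 1) (u : X → ℝ) :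
    ∑ ℓ : X → Bool, (∏ x, p x (ℓ x)) * ∑ a, u a * (if ℓ a then (1 : ℝ) else 0) =
      meanLoss u p := by
  simp_rw [mul_sum]
  rw [sum_comm]
  refine sum_congr rfl fun a _ => ?_
  rw [sum_prod_apply_mul hp a fun b => u a * (if b then (1 : ℝ) else 0)]
  simp [mul_comm]

theorem sum_lossSeqLaw_mul_loss (hp : ∀ x, ∑ b, p x b = 1) (u : X → ℝ) :
    ∑ L : Fin T → X → Bool, lossSeqLaw p L * ∑ t, ∑ a, u a * (if L t a then (1 : ℝ) else 0) =
      T * meanLoss u p := by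
  simp_rw [mul_sum (ι := Fin T)]
  rw [sum_comm]
  have round (t : Fin T) : ∑ L : Fin T → X → Bool, lossSeqLaw p L *
      ∑ a, u a * (if L t a then (1 : ℝ) else 0) = meanLoss u p :=
    (sum_prod_apply_mul (fun _ => sum_prod_apply_eq_one hp) t fun ℓ =>
      ∑ a, u a * (if ℓ a then (1 : ℝ) else 0)).trans (sum_prod_mul_loss_eq_meanLoss hp u)
  simp_rw [round, sum_const, card_univ, Fintype.card_fin, nsmul_eq_mul]

theorem sum_roundKernel_mul (l : List ((X → Bool) × ι × X)) (F : (X → Bool) × ι × X → ℝ) :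
    ∑ r, roundKernel alg θ p l r * F r =
      ∑ i, ∑ x, policyLaw alg (l.map observe) i * θ i x *
        ∑ ℓ : X → Bool, (∏ y, p y (ℓ y)) * F (ℓ, i, x) := by
  rw [Fintype.sum_prod_type_right, Fintype.sum_prod_type]
  refine sum_congr rfl fun i _ => sum_congr rfl fun x _ => ?_
  rw [mul_sum]
  exact sum_congr rfl fun ℓ _ => by rw [roundKernel]; ring

theorem sum_roundKernel_mul_observe (hp : ∀ x, ∑ b, p x b = 1) (l : List ((X → Bool) × ι × X))
    (φ : ι × X × Bool → ℝ) :
    ∑ r, roundKernel alg θ p l r * φ (observe r) =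
      ∑ o, obsKernel alg θ p (l.map observe) o * φ o := by
  rw [sum_roundKernel_mul, sum_obsKernel_mul]
  refine sum_congr rfl fun i _ => sum_congr rfl fun x _ => ?_
  rw [← sum_prod_apply_mul hp x fun b => φ (i, x, b)]
  rfl

theorem sum_roundKernel_mul_loss (hp : ∀ x, ∑ b, p x b = 1) (l : List ((X → Bool) × ι × X)) :
    ∑ r, roundKernel alg θ p l r * ∑ a, θ r.2.1 a * (if r.1 a then (1 : ℝ) else 0) =
      ∑ o, obsKernel alg θ p (l.map observe) o * meanLoss (θ o.1) p := by
  rw [sum_roundKernel_mul, sum_obsKernel_mul]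
  refine sum_congr rfl fun i _ => sum_congr rfl fun x _ => ?_
  dsimp only
  rw [sum_prod_mul_loss_eq_meanLoss hp, ← sum_mul, hp, one_mul]

theorem sum_lossSeqLaw_mul_sum_medProb_mul_loss (halg : ∀ t l, ∑ i, alg t l i = 1)
    (hθ : ∀ i, ∑ x, θ i x = 1) (hp : ∀ x, ∑ b, p x b = 1) :
    ∑ L : Fin T → X → Bool, lossSeqLaw p L * ∑ h : Fin T → ι × X, medProb alg θ L h *
        ∑ t, ∑ a, θ (h t).1 a * (if L t a then (1 : ℝ) else 0) =
      ∑ ω : Fin T → ι × X × Bool,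
        seqLaw (obsKernel alg θ p) ω * ∑ t, meanLoss (θ (ω t).1) p := by
  rw [← sum_seqLaw_mul_sum_eq_of_map observe (sum_obsKernel halg hθ hp)
      (sum_roundKernel_mul_observe hp) (sum_roundKernel_mul_loss hp),
    ← (Equiv.arrowProdEquivProdArrow (Fin T) (fun _ => X → Bool) fun _ => ι × X).symm.sum_comp,
    Fintype.sum_prod_type]
  simp_rw [mul_sum (ι := Fin T → ι × X), ← mul_assoc, lossSeqLaw_mul_medProb]
  rfl

theorem sum_seqLaw_mul_sum_gap_le_mediatorRegret [Nonempty ι] (halg : ∀ t l, ∑ i, alg t l i = 1)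
    (hθ : ∀ i, ∑ x, θ i x = 1) (hp : ∀ x, ∑ b, p x b = 1) (i₀ : ι) :
    ∑ ω : Fin T → ι × X × Bool, seqLaw (obsKernel alg θ p) ω *
        ∑ t, (meanLoss (θ (ω t).1) p - meanLoss (θ i₀) p) ≤
      mediatorRegret alg θ (lossSeqLaw (T := T) p) := by
  have best_le := inf'_le (fun i => ∑ L : Fin T → X → Bool, lossSeqLaw p L *
    ∑ t, ∑ a, θ i a * (if L t a then (1 : ℝ) else 0)) (mem_univ i₀)
  rw [sum_lossSeqLaw_mul_loss hp] at best_le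
  rw [mediatorRegret, sum_lossSeqLaw_mul_sum_medProb_mul_loss halg hθ hp]
  simp_rw [sum_sub_distrib, mul_sub, sum_sub_distrib, ← sum_mul,
    sum_seqLaw (sum_obsKernel halg hθ hp), sum_const, card_univ, Fintype.card_fin, nsmul_eq_mul,
    one_mul]
  exact sub_le_sub_left best_le _

end Regret

section HardEnvironments

variable {X : Type*} {u v : X → ℝ} {s : ℝ}

/-- The hard environments: a loss of mean `1 / 2 + s f x` for outcome `x`, with `f` the Hellinger
score of the two policies `u` and `v`. For `s > 0` policy `v` is the better one, for `s < 0`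
policy `u` is. -/
def hardLoss (u v : X → ℝ) (s : ℝ) (x : X) : Bool → ℝ :=
  biasedCoin (s * hellingerScore (u x) (v x))

theorem hardLoss_nonneg (hs : s ^ 2 ≤ 1 / 4) (x : X) (b : Bool) : 0 ≤ hardLoss u v s x b := by
  refine biasedCoin_nonneg (abs_le_of_sq_le_sq ?_ (by norm_num)) b
  rw [mul_pow]
  nlinarith [sq_nonneg s, sq_hellingerScore_le_one (u x) (v x)]

theorem sum_hardLoss (x : X) : ∑ b, hardLoss u v s x b = 1 := sum_biasedCoin _

theorem one_sub_le_sum_sqrt_hardLoss_mul (hs : s ^ 2 ≤ 3 / 16) (x : X) :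
    1 - 8 / 3 * s ^ 2 * hellingerScore (u x) (v x) ^ 2 ≤
      ∑ b, √(hardLoss u v s x b * hardLoss u v (-s) x b) := by
  rw [mul_assoc, ← mul_pow]
  simp_rw [hardLoss, neg_mul]
  refine one_sub_le_sum_sqrt_biasedCoin_mul ?_
  rw [mul_pow]
  nlinarith [sq_nonneg s, sq_hellingerScore_le_one (u x) (v x)]

variable [Fintype X]

theorem meanLoss_hardLoss {w : X → ℝ} (hw : ∑ x, w x = 1) :
    meanLoss w (hardLoss u v s) = 1 / 2 + s * ∑ x, w x * hellingerScore (u x) (v x) := by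
  simp_rw [meanLoss, hardLoss, biasedCoin, if_true, mul_add, sum_add_distrib, ← sum_mul, hw,
    one_mul, mul_sum, mul_left_comm]

theorem meanLoss_hardLoss_sub (hu : ∀ x, 0 ≤ u x) (hv : ∀ x, 0 ≤ v x) (hu1 : ∑ x, u x = 1)
    (hv1 : ∑ x, v x = 1) :
    meanLoss u (hardLoss u v s) - meanLoss v (hardLoss u v s) = 2 * s * sqHellinger u v := by
  rw [meanLoss_hardLoss hu1, meanLoss_hardLoss hv1]
  linear_combination s * sum_mul_hellingerScore_sub hu hv

theorem one_sub_le_sum_mul_sum_sqrt_hardLoss_mul {w : X → ℝ} (hu : ∀ x, 0 ≤ u x)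
    (hv : ∀ x, 0 ≤ v x) (hw : ∀ x, 0 ≤ w x) (hwuv : ∀ x, w x ≤ max (u x) (v x))
    (hw1 : ∑ x, w x = 1) (hs : s ^ 2 ≤ 3 / 16) :
    1 - 16 / 3 * s ^ 2 * sqHellinger u v ≤
      ∑ x, w x * ∑ b, √(hardLoss u v s x b * hardLoss u v (-s) x b) := by
  have information_le : ∑ x, w x * hellingerScore (u x) (v x) ^ 2 ≤ 2 * sqHellinger u v := by
    rw [sqHellinger, ← mul_assoc, mul_one_div_cancel two_ne_zero, one_mul]
    exact sum_le_sum fun x _ => (mul_le_mul_of_nonneg_right (hwuv x) (sq_nonneg _)).trans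
      (max_mul_sq_hellingerScore_le (hu x) (hv x))
  calc 1 - 16 / 3 * s ^ 2 * sqHellinger u v
      = 1 - 8 / 3 * s ^ 2 * (2 * sqHellinger u v) := by ring
    _ ≤ 1 - 8 / 3 * s ^ 2 * ∑ x, w x * hellingerScore (u x) (v x) ^ 2 := by gcongr
    _ = ∑ x, w x * (1 - 8 / 3 * s ^ 2 * hellingerScore (u x) (v x) ^ 2) := by
      simp_rw [mul_sub, mul_one, sum_sub_distrib, hw1, mul_sum, mul_left_comm]
    _ ≤ _ := sum_le_sum fun x _ =>
      mul_le_mul_of_nonneg_left (one_sub_le_sum_sqrt_hardLoss_mul hs x) (hw x)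

end HardEnvironments

section TwoPolicies

variable {X : Type*} [Fintype X] {θ : Fin 2 → X → ℝ} {T : ℕ}
  {alg : ℕ → List (Fin 2 × X × ℝ) → Fin 2 → ℝ} {s : ℝ}

/-- The law of the learner's observations in the hard environment of parameter `s`. -/
def hardTranscriptLaw (alg : ℕ → List (Fin 2 × X × ℝ) → Fin 2 → ℝ) (θ : Fin 2 → X → ℝ) (s : ℝ)
    (ω : Fin T → Fin 2 × X × Bool) : ℝ :=
  seqLaw (obsKernel alg θ (hardLoss (θ 0) (θ 1) s)) ω

theorem one_sub_le_sum_sqrt_hardTranscriptLaw_mul (hθ0 : ∀ i x, 0 ≤ θ i x)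
    (hθ1 : ∀ i, ∑ x, θ i x = 1)
    (halg : ∀ t l, (∀ i, 0 ≤ alg t l i) ∧ ∑ i, alg t l i = 1) (hs : s ^ 2 ≤ 3 / 16) :
    1 - 16 / 3 * (s ^ 2 * sqHellinger (θ 0) (θ 1) * T) ≤
      ∑ ω : Fin T → Fin 2 × X × Bool,
        √(hardTranscriptLaw alg θ s ω * hardTranscriptLaw alg θ (-s) ω) := by
  set H := sqHellinger (θ 0) (θ 1)
  have hsH : s ^ 2 * H ≤ 3 / 16 * 1 :=
    mul_le_mul hs (sqHellinger_le_one (hθ0 0) (hθ0 1) (hθ1 0) (hθ1 1))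
      (sqHellinger_nonneg _ _) (by norm_num)
  have mass_le_max (i : Fin 2) (x : X) : θ i x ≤ max (θ 0 x) (θ 1 x) := by
    fin_cases i <;> simp
  calc 1 - 16 / 3 * (s ^ 2 * H * T) = 1 + T * (-(16 / 3 * s ^ 2 * H)) := by ring
    _ ≤ (1 + -(16 / 3 * s ^ 2 * H)) ^ T := one_add_mul_le_pow (by linarith) T
    _ = (1 - 16 / 3 * s ^ 2 * H) ^ T := by rw [← sub_eq_add_neg]
    _ ≤ _ := pow_le_sum_sqrt_seqLaw_obsKernel_mul (by linarith) halg hθ0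
      (hardLoss_nonneg (by linarith)) (hardLoss_nonneg (by rw [neg_sq]; linarith)) fun i =>
        one_sub_le_sum_mul_sum_sqrt_hardLoss_mul (hθ0 0) (hθ0 1) (hθ0 i) (mass_le_max i) (hθ1 i) hs

theorem le_sum_min_hardTranscriptLaw (hθ0 : ∀ i x, 0 ≤ θ i x) (hθ1 : ∀ i, ∑ x, θ i x = 1)
    (halg : ∀ t l, (∀ i, 0 ≤ alg t l i) ∧ ∑ i, alg t l i = 1) (hs : s ^ 2 ≤ 3 / 16)
    (hsT : s ^ 2 * sqHellinger (θ 0) (θ 1) * T ≤ 1 / 50) :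
    68 / 125 ≤ ∑ ω : Fin T → Fin 2 × X × Bool,
      min (hardTranscriptLaw alg θ s ω) (hardTranscriptLaw alg θ (-s) ω) := by
  have law_nonneg (s' : ℝ) (hs' : s' ^ 2 ≤ 1 / 4) (ω : Fin T → Fin 2 × X × Bool) :
      0 ≤ hardTranscriptLaw alg θ s' ω :=
    seqLaw_nonneg (obsKernel_nonneg (fun t l => (halg t l).1) hθ0 (hardLoss_nonneg hs')) ω
  have sum_law (s' : ℝ) : ∑ ω : Fin T → Fin 2 × X × Bool, hardTranscriptLaw alg θ s' ω = 1 :=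
    sum_seqLaw (sum_obsKernel (fun t l => (halg t l).2) hθ1 sum_hardLoss)
  have affinity_ge := one_sub_le_sum_sqrt_hardTranscriptLaw_mul (T := T) hθ0 hθ1 halg hs
  have leCam := sq_sum_sqrt_mul_le (law_nonneg s (by linarith))
    (law_nonneg (-s) (by rw [neg_sq]; linarith)) (sum_law s) (sum_law (-s))
  by_contra! overlap_lt
  nlinarith

variable [DecidableEq X]

theorem mul_sum_min_le_mediatorRegret_add (hθ0 : ∀ i x, 0 ≤ θ i x) (hθ1 : ∀ i, ∑ x, θ i x = 1)
    (halg : ∀ t l, ∑ i, alg t l i = 1) (hs : 0 ≤ s) :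
    2 * s * sqHellinger (θ 0) (θ 1) * T * (∑ ω : Fin T → Fin 2 × X × Bool,
        min (hardTranscriptLaw alg θ s ω) (hardTranscriptLaw alg θ (-s) ω)) ≤
      mediatorRegret alg θ (lossSeqLaw (T := T) (hardLoss (θ 0) (θ 1) s)) +
        mediatorRegret alg θ (lossSeqLaw (T := T) (hardLoss (θ 0) (θ 1) (-s))) := by
  set Δ := 2 * s * sqHellinger (θ 0) (θ 1)
  have hΔ0 : 0 ≤ Δ := mul_nonneg (by positivity) (sqHellinger_nonneg _ _)
  have gap (s' : ℝ) := meanLoss_hardLoss_sub (s := s') (hθ0 0) (hθ0 1) (hθ1 0) (hθ1 1)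
  have gap_pos (i : Fin 2) : meanLoss (θ i) (hardLoss (θ 0) (θ 1) s) -
      meanLoss (θ 1) (hardLoss (θ 0) (θ 1) s) = if i = 0 then Δ else 0 := by
    fin_cases i
    · simpa using gap s
    · simp
  have gap_neg (i : Fin 2) : meanLoss (θ i) (hardLoss (θ 0) (θ 1) (-s)) -
      meanLoss (θ 0) (hardLoss (θ 0) (θ 1) (-s)) = if i = 0 then 0 else Δ := by
    fin_cases i
    · simp
    · simp only [Fin.mk_one, one_ne_zero, if_false]
      linear_combination -gap (-s)
  refine le_trans ?_ (add_le_add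
    (sum_seqLaw_mul_sum_gap_le_mediatorRegret halg hθ1 sum_hardLoss 1)
    (sum_seqLaw_mul_sum_gap_le_mediatorRegret halg hθ1 sum_hardLoss 0))
  simp_rw [gap_pos, gap_neg]
  refine mul_sum_min_le (fun ω => sum_nonneg fun t _ => by split_ifs <;> simp [hΔ0])
    (fun ω => sum_nonneg fun t _ => by split_ifs <;> simp [hΔ0]) fun ω => ?_
  have one_policy_errs (t : Fin T) :
      ((if (ω t).1 = 0 then Δ else 0) + if (ω t).1 = 0 then 0 else Δ) = Δ := by
    split_ifs <;> simp
  rw [← sum_add_distrib]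
  simp_rw [one_policy_errs, sum_const, card_univ, Fintype.card_fin, nsmul_eq_mul, mul_comm]

theorem exists_le_mediatorRegret (hθ0 : ∀ i x, 0 ≤ θ i x) (hθ1 : ∀ i, ∑ x, θ i x = 1)
    (halg : ∀ t l, (∀ i, 0 ≤ alg t l i) ∧ ∑ i, alg t l i = 1) (hs0 : 0 ≤ s)
    (hs : s ^ 2 ≤ 3 / 16) (hsT : s ^ 2 * sqHellinger (θ 0) (θ 1) * T ≤ 1 / 50) :
    ∃ w : (Fin T → X → Bool) → ℝ, (∀ L, 0 ≤ w L) ∧ (∑ L, w L = 1) ∧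
      68 / 125 * (s * sqHellinger (θ 0) (θ 1) * T) ≤ mediatorRegret alg θ w := by
  set H := sqHellinger (θ 0) (θ 1)
  have hH : 0 ≤ H := sqHellinger_nonneg _ _
  have overlap_ge := le_sum_min_hardTranscriptLaw hθ0 hθ1 halg hs hsT
  have regret_add_ge :=
    calc 68 / 125 * (s * H * T) + 68 / 125 * (s * H * T)
        = 2 * s * H * T * (68 / 125) := by ring
      _ ≤ _ := mul_le_mul_of_nonneg_left overlap_ge (by positivity)
      _ ≤ _ := mul_sum_min_le_mediatorRegret_add hθ0 hθ1 (fun t l => (halg t l).2) hs0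
  obtain h | h := le_or_le_of_add_le_add regret_add_ge
  · exact ⟨_, lossSeqLaw_nonneg (hardLoss_nonneg (by linarith)), sum_lossSeqLaw sum_hardLoss, h⟩
  · exact ⟨_, lossSeqLaw_nonneg (hardLoss_nonneg (by rw [neg_sq]; linarith)),
      sum_lossSeqLaw sum_hardLoss, h⟩

end TwoPolicies

section Tuning

theorem three_div_eight_le_mul_of_horizon {H T : ℝ} (hH : 0 < H) (hT0 : 0 ≤ T)
    (hT : 1 / (8 * Real.log (4 / 3) * H) ≤ T) : 3 / 8 ≤ H * T := by
  have hlog : 0 < Real.log (4 / 3) := Real.log_pos (by norm_num)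
  have hlog_le : Real.log (4 / 3) ≤ 1 / 3 :=
    (Real.log_le_sub_one_of_pos (by norm_num)).trans_eq (by norm_num)
  rw [div_le_iff₀ (by positivity)] at hT
  nlinarith [mul_le_mul_of_nonneg_left hlog_le (mul_nonneg hH.le hT0)]

theorem sq_inv_five_mul_sqrt {y : ℝ} (hy : 0 ≤ y) : (5 * √y)⁻¹ ^ 2 = 1 / 25 * y⁻¹ := by
  rw [inv_pow, mul_pow, Real.sq_sqrt hy, mul_inv]
  norm_num

theorem sq_inv_five_mul_sqrt_mul_le {y : ℝ} (hy : 0 ≤ y) : (5 * √y)⁻¹ ^ 2 * y ≤ 1 / 25 := by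
  rw [sq_inv_five_mul_sqrt hy, mul_assoc]
  linarith [inv_mul_le_one (a := y)]

theorem sq_inv_five_mul_sqrt_le {H T : ℝ} (hH : 0 ≤ H) (hT0 : 0 ≤ T)
    (hT : 1 / (8 * Real.log (4 / 3) * H) ≤ T) : (5 * √(2 * H * T))⁻¹ ^ 2 ≤ 3 / 16 := by
  rw [sq_inv_five_mul_sqrt (by positivity)]
  rcases hH.eq_or_lt with rfl | hHpos
  · norm_num
  · have hHT : 3 / 4 ≤ 2 * H * T := by
      linarith [three_div_eight_le_mul_of_horizon hHpos hT0 hT]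
    linarith [inv_anti₀ (by norm_num) hHT]

theorem one_div_thirteen_mul_sqrt_two_le : 1 / (13 * √2) ≤ 34 / 625 := by
  have : (1.4142 : ℝ) ≤ √2 := Real.le_sqrt_of_sq_le (by norm_num)
  rw [div_le_div_iff₀ (by positivity) (by norm_num)]
  linarith

end Tuning

/-- Two-policy mediator-feedback lower bound.  For any algorithm and any
horizon `T ≥ 1/(8 log(4/3) H²(θ₀,θ₁))`, there exists a (stochastic, Boolean-valued)
sequence of losses, given by a distribution `w` over loss sequences, under which the
expected regret is at least `(1/(13√2))·√(C(θ₀,θ₁)·T)`, where `C(θ₀,θ₁)` is the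
chi-squared capacity of the pair. -/
theorem two_policy_lower_bound {X : Type*} [Fintype X] [DecidableEq X]
    (θ : Fin 2 → X → ℝ) (hθ0 : ∀ i x, 0 ≤ θ i x) (hθ1 : ∀ i, ∑ x, θ i x = 1)
    (T : ℕ)
    (hT : 1 / (8 * Real.log (4 / 3) *
        ((1 / 2) * ∑ x, (Real.sqrt (θ 0 x) - Real.sqrt (θ 1 x)) ^ 2)) ≤ (T : ℝ))
    (alg : ℕ → List (Fin 2 × X × ℝ) → Fin 2 → ℝ)
    (halg : ∀ t l, (∀ i, 0 ≤ alg t l i) ∧ ∑ i, alg t l i = 1) :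
    ∃ w : (Fin T → X → Bool) → ℝ, (∀ L, 0 ≤ w L) ∧ (∑ L, w L = 1) ∧
      1 / (13 * Real.sqrt 2) *
          Real.sqrt
            (sSup ((fun r : ℝ =>
                r * (1 - r) * ∑ x, (θ 0 x - θ 1 x) ^ 2 /
                  (r * θ 0 x + (1 - r) * θ 1 x)) '' Set.Icc (0 : ℝ) 1) * T)
        ≤ (∑ L, w L * ∑ h : Fin T → Fin 2 × X,
              medProb alg θ L h *
                ∑ t : Fin T, ∑ a, θ (h t).1 a * (if L t a then (1 : ℝ) else 0))
          - univ.inf' univ_nonempty (fun i : Fin 2 =>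
              ∑ L, w L * ∑ t : Fin T, ∑ a, θ i a * (if L t a then (1 : ℝ) else 0)) := by
  set H := sqHellinger (θ 0) (θ 1)
  have hH : 0 ≤ H := sqHellinger_nonneg _ _
  have hs : (5 * √(2 * H * T))⁻¹ ^ 2 ≤ 3 / 16 := sq_inv_five_mul_sqrt_le hH T.cast_nonneg hT
  have hsT : (5 * √(2 * H * T))⁻¹ ^ 2 * (2 * H * T) ≤ 1 / 25 :=
    sq_inv_five_mul_sqrt_mul_le (by positivity)
  obtain ⟨w, hw0, hw1, hregret⟩ := exists_le_mediatorRegret (T := T) hθ0 hθ1 halg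
    (by positivity) hs (by linarith)
  refine ⟨w, hw0, hw1, le_trans ?_ hregret⟩
  calc 1 / (13 * √2) * √(chiSqCapacity (θ 0) (θ 1) * T)
    _ ≤ 34 / 625 * √(2 * H * T) :=
      mul_le_mul one_div_thirteen_mul_sqrt_two_le
        (Real.sqrt_le_sqrt (mul_le_mul_of_nonneg_right
          (chiSqCapacity_le_two_mul_sqHellinger (hθ0 0) (hθ0 1)) T.cast_nonneg))
        (Real.sqrt_nonneg _) (by norm_num)
    _ = 34 / 625 * (2 * H * T / √(2 * H * T)) := by rw [Real.div_sqrt]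
    _ = 68 / 125 * ((5 * √(2 * H * T))⁻¹ * H * T) := by rw [mul_inv]; ring

end
end

section
/- In the mediator feedback problem with the ε-greedy policy set (N policies on N outcomes, θ_i(x) = (1−ε)/N + ε𝟙{x=x_i}), for any algorithm and T ≥ N/(4 log(4/3)), there exists a sequence of [0,1]-valued losses such that R_T ≥ (ε/18)·√(NT). -/
open Finset

noncomputable section

/-- The ε-greedy policy: `N` policies on `N` outcomes, the `i`-th policy assigning
probability `(1−ε)/N + ε·𝟙{x = i}` to outcome `x`. -/
def epsGreedy (N : ℕ) (ε : ℝ) (i x : Fin N) : ℝ :=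
  (1 - ε) / N + if x = i then ε else 0

/-!
In environment `i` the losses are independent fair coins, except that outcome `i` has mean
`1 / 2 - Δ`. A round in which the learner does not play policy `i` then costs `Δ * ε` more than
policy `i` does. Only the rounds in which outcome `i` is observed tell environment `i` apart from
the all-fair one, so the divergence between the two laws of the learner's records is the expected
number of such rounds under fair coins times the divergence of a single coin. Under fair coins the
numbers of observations of the `N` outcomes add up to `T`, and so do the numbers of plays of the `N`
policies. Hence for some `i` Pinsker's inequality bounds the expected number of plays of policy `i`
in environment `i` by `3 / 4 * T`, provided that `Δ` is at most of order `√(N / T)`.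
-/

section FiniteProbability

variable {Ω : Type*} [Fintype Ω]

open MeasureTheory ProbabilityTheory in
lemma sum_mul_exp_le_of_mem_Icc {q f : Ω → ℝ} (hq : q ∈ stdSimplex ℝ Ω) {a b : ℝ}
    (hf : ∀ z, f z ∈ Set.Icc a b) :
    ∑ z, q z * Real.exp (f z) ≤ Real.exp (∑ z, q z * f z + (b - a) ^ 2 / 8) := by
  let _ : MeasurableSpace Ω := ⊤
  have q_sum : ∑ z, ENNReal.ofReal (q z) = 1 := by
    rw [← ENNReal.ofReal_sum_of_nonneg fun z _ => hq.1 z, hq.2, ENNReal.ofReal_one]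
  let Q : PMF Ω := PMF.ofFintype (fun z => ENNReal.ofReal (q z)) q_sum
  have integral_Q (g : Ω → ℝ) : ∫ z, g z ∂Q.toMeasure = ∑ z, q z * g z := by
    rw [PMF.integral_eq_sum]
    exact sum_congr rfl fun z _ => by simp [Q, ENNReal.toReal_ofReal (hq.1 z)]
  have hoeffding := (hasSubgaussianMGF_of_mem_Icc (μ := Q.toMeasure)
    (measurable_from_top.aemeasurable) (ae_of_all _ hf)).mgf_le 1
  simp only [mgf, integral_Q, one_mul, one_pow, mul_one, Real.exp_sub, ← mul_div_assoc,
    ← sum_div] at hoeffding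
  rw [div_le_iff₀ (Real.exp_pos _), ← Real.exp_add] at hoeffding
  refine hoeffding.trans_eq (congrArg Real.exp ?_)
  push_cast
  rw [Real.norm_eq_abs, div_pow, sq_abs]
  ring

/- Pinsker's inequality linearised by AM-GM, with `-∑ z, p z * r z` the divergence of `p` from `q`:
Jensen under `p` against Hoeffding under `q`, both applied to `exp (r - f)`. -/
lemma sum_mul_le_of_eq_mul_exp {p q r f : Ω → ℝ} (hp : p ∈ stdSimplex ℝ Ω)
    (hq : q ∈ stdSimplex ℝ Ω) (hr : ∀ z, q z = p z * Real.exp (r z)) {a b : ℝ}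
    (hf : ∀ z, f z ∈ Set.Icc a b) :
    ∑ z, q z * f z ≤ ∑ z, p z * f z - ∑ z, p z * r z + (b - a) ^ 2 / 8 := by
  have jensen : Real.exp (∑ z, p z * (r z - f z)) ≤ ∑ z, p z * Real.exp (r z - f z) :=
    convexOn_exp.map_sum_le (fun z _ => hp.1 z) hp.2 (by simp)
  have tilt : ∑ z, p z * Real.exp (r z - f z) = ∑ z, q z * Real.exp (-f z) :=
    sum_congr rfl fun z _ => by rw [hr, sub_eq_add_neg, Real.exp_add, mul_assoc]
  have hoeffding := sum_mul_exp_le_of_mem_Icc hq (f := fun z => -f z) (a := -b) (b := -a)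
    fun z => ⟨neg_le_neg (hf z).2, neg_le_neg (hf z).1⟩
  have exponents := Real.exp_le_exp.1 (jensen.trans (tilt.trans_le hoeffding))
  simp only [mul_sub, mul_neg, sum_sub_distrib, sum_neg_distrib] at exponents
  linarith

lemma prod_mem_stdSimplex {ι : Type*} [Fintype ι] [DecidableEq ι] {q : ι → Ω → ℝ}
    (hq : ∀ i, q i ∈ stdSimplex ℝ Ω) : (fun x => ∏ i, q i (x i)) ∈ stdSimplex ℝ (ι → Ω) :=
  ⟨fun x => prod_nonneg fun i _ => (hq i).1 (x i), by
    rw [← Fintype.prod_sum]; exact prod_eq_one fun i _ => (hq i).2⟩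

lemma sum_prod_mul_apply {ι R : Type*} [Fintype ι] [DecidableEq ι] [CommSemiring R]
    {q : ι → Ω → R} (hq : ∀ i, ∑ z, q i z = 1) (i : ι) (φ : Ω → R) :
    ∑ x : ι → Ω, (∏ j, q j (x j)) * φ (x i) = ∑ z, q i z * φ z := by
  have absorb (x : ι → Ω) :
      (∏ j, q j (x j)) * φ (x i) = ∏ j, q j (x j) * if j = i then φ (x j) else 1 := by
    rw [prod_mul_distrib, prod_ite_eq' univ i, if_pos (mem_univ i)]
  simp_rw [absorb]
  rw [← Fintype.prod_sum (fun j z => q j z * if j = i then φ z else 1), prod_eq_single i]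
  · simp
  · intro j _ hj
    simp [hj, hq]
  · simp

end FiniteProbability

section AdaptiveProcess

variable {Y Z : Type*}

/-- The probability of the trajectory `y` of a process whose round-`t` value is drawn from
`κ t l`, where `l` is the list of observations `obs` of the values of the earlier rounds. -/
def trajWeight (κ : ℕ → List Z → Y → ℝ) (obs : Y → Z) {T : ℕ} (y : Fin T → Y) : ℝ :=
  ∏ t : Fin T, κ t ((List.ofFn fun s => obs (y s)).take t) (y t)

/-- The expectation of `F` under the trajectory law `trajWeight κ obs`. -/
def trajMean [Fintype Y] (κ : ℕ → List Z → Y → ℝ) (obs : Y → Z) {T : ℕ}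
    (F : (Fin T → Y) → ℝ) : ℝ :=
  ∑ y, trajWeight κ obs y * F y

/-- The number of rounds of the trajectory `y` in which the value of `g` is `x`. -/
def visitCount {X : Type*} [DecidableEq X] (g : Y → X) (x : X) {T : ℕ} (y : Fin T → Y) : ℝ :=
  ∑ t, if g (y t) = x then 1 else 0

lemma visitCount_mem_Icc {X : Type*} [DecidableEq X] (g : Y → X) (x : X) {T : ℕ}
    (y : Fin T → Y) : visitCount g x y ∈ Set.Icc (0 : ℝ) T := by
  rw [visitCount, sum_boole]
  exact ⟨by positivity, by exact_mod_cast (card_filter_le _ _).trans_eq (card_fin T)⟩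

lemma sum_visitCount {X : Type*} [Fintype X] [DecidableEq X] (g : Y → X) {T : ℕ}
    (y : Fin T → Y) : ∑ x, visitCount g x y = T := by
  simp only [visitCount]
  rw [sum_comm]
  simp

variable {κ κ' : ℕ → List Z → Y → ℝ} {obs : Y → Z}

lemma trajWeight_snoc {T : ℕ} (y : Fin T → Y) (v : Y) :
    trajWeight κ obs (Fin.snoc y v : Fin (T + 1) → Y)
      = trajWeight κ obs y * κ T (List.ofFn fun s => obs (y s)) v := by
  have history : (List.ofFn fun s => obs ((Fin.snoc y v : Fin (T + 1) → Y) s))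
      = List.ofFn (fun s => obs (y s)) ++ [obs v] := by
    rw [List.ofFn_succ_last]
    simp
  rw [trajWeight, Fin.prod_univ_castSucc, history]
  congr 1
  · refine prod_congr rfl fun t _ => ?_
    rw [List.take_append_of_le_length (by simp)]
    simp
  · simp

lemma trajWeight_eq_mul_exp {r : Y → ℝ} (hr : ∀ t l y, κ' t l y = κ t l y * Real.exp (r y))
    {T : ℕ} (y : Fin T → Y) :
    trajWeight κ' obs y = trajWeight κ obs y * Real.exp (∑ t, r (y t)) := by
  simp only [trajWeight, hr, prod_mul_distrib, Real.exp_sum]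

variable [Fintype Y]

lemma trajMean_succ {T : ℕ} (F : (Fin (T + 1) → Y) → ℝ) :
    trajMean κ obs F = trajMean κ obs fun y =>
      ∑ v, κ T (List.ofFn fun s => obs (y s)) v * F (Fin.snoc y v : Fin (T + 1) → Y) := by
  simp only [trajMean, mul_sum, ← mul_assoc, ← trajWeight_snoc]
  rw [← (Fin.snocEquiv fun _ => Y).sum_comp, Fintype.sum_prod_type_right]
  rfl

lemma sum_trajWeight (hκ : ∀ t l, ∑ v, κ t l v = 1) (T : ℕ) :
    ∑ y : Fin T → Y, trajWeight κ obs y = 1 := by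
  suffices h : trajMean κ obs (fun _ : Fin T → Y => 1) = 1 by
    simpa only [trajMean, mul_one] using h
  induction T with
  | zero => simp [trajMean, trajWeight]
  | succ T ih => simpa only [trajMean_succ, mul_one, hκ] using ih

lemma trajWeight_mem_stdSimplex (hκ : ∀ t l, κ t l ∈ stdSimplex ℝ Y) (T : ℕ) :
    trajWeight κ obs ∈ stdSimplex ℝ (Fin T → Y) :=
  ⟨fun _ => prod_nonneg fun _ _ => (hκ _ _).1 _, sum_trajWeight (fun t l => (hκ t l).2) T⟩

lemma trajMean_sum_congr (hκ : ∀ t l, ∑ v, κ t l v = 1) {g g' : Y → ℝ}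
    (hg : ∀ t l, ∑ v, κ t l v * g v = ∑ v, κ t l v * g' v) (T : ℕ) :
    trajMean κ obs (fun y : Fin T → Y => ∑ t, g (y t))
      = trajMean κ obs fun y : Fin T → Y => ∑ t, g' (y t) := by
  induction T with
  | zero => simp [trajMean]
  | succ T ih =>
    simp only [trajMean_succ, Fin.sum_univ_castSucc, Fin.snoc_castSucc, Fin.snoc_last, mul_add,
      sum_add_distrib, ← sum_mul, hκ, one_mul, hg]
    simp only [trajMean, mul_add, sum_add_distrib] at ih ⊢
    rw [ih]

lemma trajMean_comp_obs [Fintype Z] {κZ : ℕ → List Z → Z → ℝ}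
    (h : ∀ t l (φ : Z → ℝ), ∑ v, κ t l v * φ (obs v) = ∑ z, κZ t l z * φ z) {T : ℕ}
    (F : (Fin T → Z) → ℝ) :
    trajMean κ obs (fun y => F fun s => obs (y s)) = trajMean κZ id F := by
  induction T with
  | zero => simp [trajMean, trajWeight, Subsingleton.elim _ (default : Fin 0 → Z)]
  | succ T ih =>
    have obs_snoc (y : Fin T → Y) (v : Y) :
        (fun s => obs ((Fin.snoc y v : Fin (T + 1) → Y) s))
          = Fin.snoc (fun s => obs (y s)) (obs v) :=
      Fin.comp_snoc obs y v
    have marginal (y : Fin T → Y) := h T (List.ofFn fun s => obs (y s))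
      fun z => F (Fin.snoc (fun s => obs (y s)) z)
    simp only [trajMean_succ, obs_snoc, marginal]
    exact ih fun z => ∑ v, κZ T (List.ofFn z) v * F (Fin.snoc z v)

lemma trajMean_le_of_eq_mul_exp (hκ : ∀ t l, κ t l ∈ stdSimplex ℝ Y)
    (hκ' : ∀ t l, κ' t l ∈ stdSimplex ℝ Y) {r : Y → ℝ}
    (hr : ∀ t l y, κ' t l y = κ t l y * Real.exp (r y)) {T : ℕ} {F : (Fin T → Y) → ℝ} {a b : ℝ}
    (hF : ∀ y, F y ∈ Set.Icc a b) :
    trajMean κ' obs F ≤ trajMean κ obs F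
      - trajMean κ obs (fun y : Fin T → Y => ∑ t, r (y t)) + (b - a) ^ 2 / 8 :=
  sum_mul_le_of_eq_mul_exp (trajWeight_mem_stdSimplex hκ T) (trajWeight_mem_stdSimplex hκ' T)
    (trajWeight_eq_mul_exp hr) hF

lemma sum_trajMean_visitCount {X : Type*} [Fintype X] [DecidableEq X]
    (hκ : ∀ t l, ∑ v, κ t l v = 1) (g : Y → X) (T : ℕ) :
    ∑ x, trajMean κ obs (fun y : Fin T → Y => visitCount g x y) = T := by
  simp only [trajMean]
  rw [sum_comm]
  simp only [← mul_sum, sum_visitCount]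
  rw [← sum_mul, sum_trajWeight hκ, one_mul]

end AdaptiveProcess

section BernoulliFeedback

/-- The probability of the bit `b` under the Bernoulli law of mean `p`. -/
def bernoulliWeight (p : ℝ) (b : Bool) : ℝ := if b then p else 1 - p

/-- The Kullback–Leibler divergence of the Bernoulli law of mean `p` from that of mean `q`. -/
def bernoulliKL (p q : ℝ) : ℝ :=
  ∑ b, bernoulliWeight p b * Real.log (bernoulliWeight p b / bernoulliWeight q b)

lemma sum_bernoulliWeight (p : ℝ) : ∑ b, bernoulliWeight p b = 1 := by
  simp [bernoulliWeight]

lemma bernoulliWeight_mem_stdSimplex {p : ℝ} (hp : p ∈ Set.Icc (0 : ℝ) 1) :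
    bernoulliWeight p ∈ stdSimplex ℝ Bool :=
  ⟨Bool.rec (sub_nonneg.2 hp.2) hp.1, sum_bernoulliWeight p⟩

lemma bernoulliWeight_pos {p : ℝ} (hp : p ∈ Set.Ioo (0 : ℝ) 1) (b : Bool) :
    0 < bernoulliWeight p b :=
  b.rec (sub_pos.2 hp.2) hp.1

lemma bernoulliKL_self (p : ℝ) : bernoulliKL p p = 0 :=
  sum_eq_zero fun b _ => by by_cases h : bernoulliWeight p b = 0 <;> simp [h]

lemma bernoulliKL_half_sub {Δ : ℝ} (hΔ : |Δ| < 1 / 2) :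
    bernoulliKL (1 / 2) (1 / 2 - Δ) = -Real.log (1 - 4 * Δ ^ 2) / 2 := by
  have ⟨hlow, hup⟩ := abs_lt.1 hΔ
  have hfactor : 1 - 4 * Δ ^ 2 = (1 - 2 * Δ) * (1 + 2 * Δ) := by ring
  have htrue : 1 / 2 / (1 / 2 - Δ) = (1 - 2 * Δ)⁻¹ := by
    rw [inv_eq_one_div, div_eq_div_iff (by linarith) (by linarith)]; ring
  have hfalse : (1 - 1 / 2) / (1 - (1 / 2 - Δ)) = (1 + 2 * Δ)⁻¹ := by
    rw [inv_eq_one_div, div_eq_div_iff (by linarith) (by linarith)]; ring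
  rw [hfactor, Real.log_mul (by linarith) (by linarith)]
  simp only [bernoulliKL, Fintype.sum_bool, bernoulliWeight, if_true, Bool.false_eq_true, if_false,
    htrue, hfalse, Real.log_inv]
  ring

/- `log (1 - x) ≥ -4 * log (4 / 3) * x` on `[0, 1 / 4]`: the concave left side lies above its
chord. -/
lemma bernoulliKL_half_sub_le {Δ : ℝ} (h0 : 0 ≤ Δ) (h1 : Δ ≤ 1 / 4) :
    bernoulliKL (1 / 2) (1 / 2 - Δ) ≤ 8 * Real.log (4 / 3) * Δ ^ 2 := by
  have hsq : Δ ^ 2 ≤ 1 / 16 := by nlinarith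
  have chord := strictConcaveOn_log_Ioi.concaveOn.2 (Set.mem_Ioi.2 one_pos)
    (Set.mem_Ioi.2 (by norm_num : (0 : ℝ) < 3 / 4)) (by linarith : 0 ≤ 1 - 16 * Δ ^ 2)
    (by positivity : 0 ≤ 16 * Δ ^ 2) (by ring)
  have hlog : Real.log (3 / 4) = -Real.log (4 / 3) := by
    rw [← Real.log_inv]; norm_num
  have hpoint : (1 - 16 * Δ ^ 2) * 1 + 16 * Δ ^ 2 * (3 / 4) = 1 - 4 * Δ ^ 2 := by ring
  simp only [smul_eq_mul, Real.log_one, mul_zero, zero_add, hlog, hpoint] at chord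
  rw [bernoulliKL_half_sub (abs_lt.2 ⟨by linarith, by linarith⟩)]
  linarith

variable {A X : Type*}

/-- One round of bandit interaction as seen by the learner: an action `a` drawn from `c t l` is
recorded with a Bernoulli bit of mean `p (arm a)`, where `l` is the list of earlier records. -/
def banditStep (arm : A → X) (c : ℕ → List (A × Bool) → A → ℝ) (p : X → ℝ) (t : ℕ)
    (l : List (A × Bool)) (z : A × Bool) : ℝ :=
  c t l z.1 * bernoulliWeight (p (arm z.1)) z.2

variable {arm : A → X} {c : ℕ → List (A × Bool) → A → ℝ} {p q : X → ℝ}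

lemma banditStep_eq_mul_exp (hp : ∀ x, p x ∈ Set.Ioo (0 : ℝ) 1)
    (hq : ∀ x, q x ∈ Set.Ioo (0 : ℝ) 1) (t : ℕ) (l : List (A × Bool)) (z : A × Bool) :
    banditStep arm c q t l z = banditStep arm c p t l z *
      Real.exp (-Real.log (bernoulliWeight (p (arm z.1)) z.2
        / bernoulliWeight (q (arm z.1)) z.2)) := by
  have hpz := bernoulliWeight_pos (hp (arm z.1)) z.2
  have hqz := bernoulliWeight_pos (hq (arm z.1)) z.2
  rw [Real.exp_neg, Real.exp_log (div_pos hpz hqz), inv_div, banditStep, banditStep, mul_assoc,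
    mul_div_cancel₀ _ hpz.ne']

variable [Fintype A]

lemma sum_banditStep_mul (t : ℕ) (l : List (A × Bool)) (φ : A × Bool → ℝ) :
    ∑ z, banditStep arm c p t l z * φ z
      = ∑ a, c t l a * ∑ b, bernoulliWeight (p (arm a)) b * φ (a, b) := by
  simp only [banditStep, Fintype.sum_prod_type, mul_sum, mul_assoc]

lemma sum_banditStep (hc : ∀ t l, ∑ a, c t l a = 1) (t : ℕ) (l : List (A × Bool)) :
    ∑ z, banditStep arm c p t l z = 1 := by
  simpa only [mul_one, sum_bernoulliWeight, hc] using
    sum_banditStep_mul (arm := arm) (c := c) (p := p) t l fun _ => 1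

lemma banditStep_mem_stdSimplex (hc : ∀ t l, c t l ∈ stdSimplex ℝ A)
    (hp : ∀ x, p x ∈ Set.Icc (0 : ℝ) 1) (t : ℕ) (l : List (A × Bool)) :
    banditStep arm c p t l ∈ stdSimplex ℝ (A × Bool) :=
  ⟨fun _ => mul_nonneg ((hc t l).1 _) ((bernoulliWeight_mem_stdSimplex (hp _)).1 _),
    sum_banditStep (fun t l => (hc t l).2) t l⟩

lemma trajMean_banditStep_le (hc : ∀ t l, c t l ∈ stdSimplex ℝ A)
    (hp : ∀ x, p x ∈ Set.Ioo (0 : ℝ) 1) (hq : ∀ x, q x ∈ Set.Ioo (0 : ℝ) 1) {T : ℕ}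
    {F : (Fin T → A × Bool) → ℝ} {a b : ℝ} (hF : ∀ z, F z ∈ Set.Icc a b) :
    trajMean (banditStep arm c q) id F ≤ trajMean (banditStep arm c p) id F
      + trajMean (banditStep arm c p) id
          (fun z : Fin T → A × Bool => ∑ t, bernoulliKL (p (arm (z t).1)) (q (arm (z t).1)))
      + (b - a) ^ 2 / 8 := by
  have hκ := banditStep_mem_stdSimplex (arm := arm) hc fun x => Set.Ioo_subset_Icc_self (hp x)
  have hκ' := banditStep_mem_stdSimplex (arm := arm) hc fun x => Set.Ioo_subset_Icc_self (hq x)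
  have change_measure := trajMean_le_of_eq_mul_exp (obs := id) hκ hκ'
    (banditStep_eq_mul_exp hp hq) hF
  have divergence := trajMean_sum_congr (obs := id) (fun t l => (hκ t l).2)
    (g := fun z => -Real.log (bernoulliWeight (p (arm z.1)) z.2
      / bernoulliWeight (q (arm z.1)) z.2))
    (g' := fun z => -bernoulliKL (p (arm z.1)) (q (arm z.1)))
    (fun t l => by
      simp only [sum_banditStep_mul, ← sum_mul, sum_bernoulliWeight, one_mul, mul_neg,
        sum_neg_distrib, bernoulliKL]) T
  rw [divergence] at change_measure
  simp only [trajMean, sum_neg_distrib, mul_neg, sub_neg_eq_add] at change_measure ⊢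
  exact change_measure

/-- Fair-coin means, except that the mean at `i` is lowered by `Δ`. -/
def loweredMean [DecidableEq X] (Δ : ℝ) (i x : X) : ℝ := 1 / 2 - if x = i then Δ else 0

variable [DecidableEq X] {Δ : ℝ} {T : ℕ}

lemma loweredMean_mem_Ioo (hΔ : |Δ| < 1 / 2) (i x : X) :
    loweredMean Δ i x ∈ Set.Ioo (0 : ℝ) 1 := by
  have ⟨hlow, hup⟩ := abs_lt.1 hΔ
  unfold loweredMean
  split_ifs <;> constructor <;> linarith

lemma trajMean_visitCount_loweredMean_le (hc : ∀ t l, c t l ∈ stdSimplex ℝ A) (hΔ : |Δ| < 1 / 2)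
    (hT : 0 < T) (g : A × Bool → X) (i : X) :
    trajMean (banditStep arm c (loweredMean Δ i)) id (fun z : Fin T → A × Bool => visitCount g i z)
      ≤ trajMean (banditStep arm c fun _ => 1 / 2) id
          (fun z : Fin T → A × Bool => visitCount g i z)
        + T * bernoulliKL (1 / 2) (1 / 2 - Δ) * trajMean (banditStep arm c fun _ => 1 / 2) id
          (fun z : Fin T → A × Bool => visitCount (fun z => arm z.1) i z)
        + T / 8 := by
  have hT' : (0 : ℝ) < T := mod_cast hT
  have change_measure := trajMean_banditStep_le (arm := arm) hc (p := fun _ => 1 / 2)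
    (fun _ => ⟨by norm_num, by norm_num⟩) (loweredMean_mem_Ioo hΔ i)
    (F := fun z : Fin T → A × Bool => visitCount g i z / T) (a := 0) (b := 1) fun z =>
      ⟨div_nonneg (visitCount_mem_Icc g i z).1 hT'.le,
        (div_le_one hT').2 (visitCount_mem_Icc g i z).2⟩
  have divergence (x : X) : bernoulliKL (1 / 2) (loweredMean Δ i x)
      = bernoulliKL (1 / 2) (1 / 2 - Δ) * if x = i then 1 else 0 := by
    unfold loweredMean
    split_ifs <;> simp [bernoulliKL_self]
  simp only [trajMean, divergence, ← mul_sum, ← mul_div_assoc, ← sum_div,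
    mul_left_comm _ (bernoulliKL _ _)] at change_measure ⊢
  have scaled := mul_le_mul_of_nonneg_left change_measure hT'.le
  simp only [mul_add, mul_div_cancel₀ _ hT'.ne'] at scaled
  simp only [visitCount] at scaled ⊢
  linarith

/- Summed over `i`, the visit counts of `g` and of `arm` under fair coins each contribute `T`. -/
lemma exists_trajMean_visitCount_le [Fintype X] (hX : 2 ≤ Fintype.card X)
    (hc : ∀ t l, c t l ∈ stdSimplex ℝ A) (hΔ : |Δ| < 1 / 2) (hT : 0 < T)
    (hKL : T * bernoulliKL (1 / 2) (1 / 2 - Δ) ≤ Fintype.card X / 8) (g : A × Bool → X) :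
    ∃ i, trajMean (banditStep arm c (loweredMean Δ i)) id
      (fun z : Fin T → A × Bool => visitCount g i z) ≤ 3 / 4 * T := by
  have : Nonempty X := Fintype.card_pos_iff.1 (by lia)
  have hX' : (2 : ℝ) ≤ Fintype.card X := mod_cast hX
  have visits (g : A × Bool → X) := sum_trajMean_visitCount (obs := id)
    (sum_banditStep (arm := arm) (p := fun _ => 1 / 2) fun t l => (hc t l).2) g T
  obtain ⟨i, -, hi⟩ := exists_le_of_sum_le (s := univ) univ_nonempty (calc
    ∑ i, trajMean (banditStep arm c (loweredMean Δ i)) id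
        (fun z : Fin T → A × Bool => visitCount g i z)
      ≤ T + T * bernoulliKL (1 / 2) (1 / 2 - Δ) * T + Fintype.card X * (T / 8) := by
        refine (sum_le_sum fun i _ =>
          trajMean_visitCount_loweredMean_le hc hΔ hT g i).trans_eq ?_
        rw [sum_add_distrib, sum_add_distrib, ← mul_sum, visits g, visits fun z => arm z.1]
        simp
    _ ≤ Fintype.card X / 2 * T + Fintype.card X / 8 * T + Fintype.card X * (T / 8) := by
        gcongr
        nlinarith [Nat.cast_nonneg (α := ℝ) T]
    _ = ∑ _i : X, 3 / 4 * (T : ℝ) := by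
        simp only [sum_const, card_univ, nsmul_eq_mul]
        ring)
  exact ⟨i, hi⟩

end BernoulliFeedback

section FullInformation

variable {A X : Type*} [Fintype X]

/-- The probability of the loss vector `l` when its entries are independent Bernoulli bits with
means `p`. -/
def lossWeight (p : X → ℝ) (l : X → Bool) : ℝ := ∏ x, bernoulliWeight (p x) (l x)

/-- The probability of the loss sequence `L` when its rounds are independent with law
`lossWeight p`. -/
def iidLossWeight (p : X → ℝ) (T : ℕ) (L : Fin T → X → Bool) : ℝ :=
  ∏ t, lossWeight p (L t)

/-- One round of bandit interaction together with the entire loss vector of that round, of which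
the learner records only the entry of its arm. -/
def fullStep (c : ℕ → List (A × Bool) → A → ℝ) (p : X → ℝ) (t : ℕ) (l : List (A × Bool))
    (y : (X → Bool) × A) : ℝ :=
  lossWeight p y.1 * c t l y.2

/-- The record that the learner keeps of a round of `fullStep`. -/
def roundRecord (arm : A → X) (y : (X → Bool) × A) : A × Bool := (y.2, y.1 (arm y.2))

variable [DecidableEq X] {p : X → ℝ}

lemma lossWeight_mem_stdSimplex (hp : ∀ x, p x ∈ Set.Icc (0 : ℝ) 1) :
    lossWeight p ∈ stdSimplex ℝ (X → Bool) :=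
  prod_mem_stdSimplex fun x => bernoulliWeight_mem_stdSimplex (hp x)

lemma iidLossWeight_mem_stdSimplex (hp : ∀ x, p x ∈ Set.Icc (0 : ℝ) 1) (T : ℕ) :
    iidLossWeight p T ∈ stdSimplex ℝ (Fin T → X → Bool) :=
  prod_mem_stdSimplex fun _ => lossWeight_mem_stdSimplex hp

lemma sum_lossWeight (p : X → ℝ) : ∑ l, lossWeight p l = 1 := by
  simp only [lossWeight, ← Fintype.prod_sum, sum_bernoulliWeight, prod_const_one]

lemma sum_lossWeight_mul_apply (p : X → ℝ) (x : X) (φ : Bool → ℝ) :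
    ∑ l, lossWeight p l * φ (l x) = ∑ b, bernoulliWeight (p x) b * φ b :=
  sum_prod_mul_apply (fun x => sum_bernoulliWeight (p x)) x φ

lemma sum_lossWeight_mul_loss (p u : X → ℝ) :
    ∑ l, lossWeight p l * ∑ x, u x * (if l x then 1 else 0) = ∑ x, u x * p x := by
  simp only [mul_sum, mul_left_comm _ (u _)]
  rw [sum_comm]
  simp only [← mul_sum, sum_lossWeight_mul_apply p _ fun b => if b then 1 else 0]
  simp [bernoulliWeight]

variable [Fintype A] {arm : A → X} {c : ℕ → List (A × Bool) → A → ℝ}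

lemma sum_fullStep_mul (t : ℕ) (l : List (A × Bool)) (φ : (X → Bool) × A → ℝ) :
    ∑ y, fullStep c p t l y * φ y = ∑ a, c t l a * ∑ v, lossWeight p v * φ (v, a) := by
  rw [Fintype.sum_prod_type_right]
  simp only [fullStep, mul_sum, mul_left_comm, mul_assoc]

lemma sum_fullStep (hc : ∀ t l, ∑ a, c t l a = 1) (t : ℕ) (l : List (A × Bool)) :
    ∑ y, fullStep c p t l y = 1 := by
  simpa only [mul_one, sum_lossWeight, hc] using sum_fullStep_mul (c := c) (p := p) t l fun _ => 1

lemma sum_fullStep_mul_record (t : ℕ) (l : List (A × Bool)) (φ : A × Bool → ℝ) :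
    ∑ y, fullStep c p t l y * φ (roundRecord arm y) = ∑ z, banditStep arm c p t l z * φ z := by
  simp only [sum_fullStep_mul, sum_banditStep_mul, roundRecord]
  exact sum_congr rfl fun a _ => by rw [sum_lossWeight_mul_apply p (arm a) fun b => φ (a, b)]

lemma trajMean_fullStep_loss (hc : ∀ t l, ∑ a, c t l a = 1) (u : A → X → ℝ) (T : ℕ) :
    trajMean (fullStep c p) (roundRecord arm)
        (fun y : Fin T → (X → Bool) × A => ∑ t, ∑ x, u (y t).2 x * if (y t).1 x then 1 else 0)
      = trajMean (banditStep arm c p) id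
          fun z : Fin T → A × Bool => ∑ t, ∑ x, u (z t).1 x * p x := by
  rw [← trajMean_comp_obs sum_fullStep_mul_record]
  exact trajMean_sum_congr (sum_fullStep hc)
    (g := fun y => ∑ x, u y.2 x * if y.1 x then 1 else 0) (g' := fun y => ∑ x, u y.2 x * p x)
    (fun t l => by simp only [sum_fullStep_mul, sum_lossWeight_mul_loss, ← sum_mul,
      sum_lossWeight, one_mul]) T

end FullInformation

section MediatorFeedback

variable {ι X : Type*} [Fintype X]

/-- The expected cumulative loss of the fixed policy `i` of the policy set `θ` when the loss
sequence has law `w`. -/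
def policyLoss [DecidableEq X] (θ : ι → X → ℝ) {T : ℕ} (w : (Fin T → X → Bool) → ℝ) (i : ι) : ℝ :=
  ∑ L, w L * ∑ t : Fin T, ∑ a, θ i a * (if L t a then 1 else 0)

/-- The expected cumulative loss of the learner `alg` playing policies from `θ` when the loss
sequence has law `w`. -/
def learnerLoss [Fintype ι] [DecidableEq X] (alg : ℕ → List (ι × X × ℝ) → ι → ℝ)
    (θ : ι → X → ℝ) {T : ℕ} (w : (Fin T → X → Bool) → ℝ) : ℝ :=
  ∑ L, w L * ∑ h : Fin T → ι × X, medProb alg θ L h *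
    ∑ t : Fin T, ∑ a, θ (h t).1 a * (if L t a then 1 else 0)

/-- Mediator feedback as a bandit problem: the joint law of the policy played by `alg` and the
outcome drawn from it, as a function of the recorded history. Losses are recorded as bits here and
handed to `alg` as real numbers. -/
def mediatorChoice (alg : ℕ → List (ι × X × ℝ) → ι → ℝ) (θ : ι → X → ℝ) (t : ℕ)
    (l : List ((ι × X) × Bool)) (a : ι × X) : ℝ :=
  alg t (l.map fun z => (z.1.1, z.1.2, if z.2 then 1 else 0)) a.1 * θ a.1 a.2

variable {alg : ℕ → List (ι × X × ℝ) → ι → ℝ} {θ : ι → X → ℝ} {T : ℕ}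

lemma policyLoss_iidLossWeight [DecidableEq X] (p : X → ℝ) (i : ι) :
    policyLoss θ (iidLossWeight p T) i = T * ∑ a, θ i a * p a := by
  simp only [policyLoss, iidLossWeight, mul_sum (univ : Finset (Fin T))]
  rw [sum_comm]
  simp only [sum_prod_mul_apply (fun _ : Fin T => sum_lossWeight p) _
    fun l => ∑ a, θ i a * if l a then 1 else 0, sum_lossWeight_mul_loss]
  simp

lemma sum_mul_loweredMean [DecidableEq X] {u : X → ℝ} (hu : ∑ x, u x = 1) (Δ : ℝ) (i : X) :
    ∑ x, u x * loweredMean Δ i x = 1 / 2 - Δ * u i := by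
  simp only [loweredMean, mul_sub, sum_sub_distrib, ← sum_mul, hu, mul_ite, mul_zero, sum_ite_eq',
    mem_univ, if_true]
  ring

variable [Fintype ι]

lemma mediatorChoice_mem_stdSimplex (halg : ∀ t l, alg t l ∈ stdSimplex ℝ ι)
    (hθ : ∀ i, θ i ∈ stdSimplex ℝ X) (t : ℕ) (l : List ((ι × X) × Bool)) :
    mediatorChoice alg θ t l ∈ stdSimplex ℝ (ι × X) := by
  refine ⟨fun a => mul_nonneg ((halg _ _).1 _) ((hθ _).1 _), ?_⟩
  simp only [mediatorChoice, Fintype.sum_prod_type, ← mul_sum, (hθ _).2, mul_one, (halg _ _).2]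

lemma iidLossWeight_mul_medProb (p : X → ℝ) (L : Fin T → X → Bool) (h : Fin T → ι × X) :
    iidLossWeight p T L * medProb alg θ L h
      = trajWeight (fullStep (mediatorChoice alg θ) p) (roundRecord Prod.snd)
          fun t => (L t, h t) := by
  have history (t : ℕ) : medHist L h t
      = ((List.ofFn fun s => roundRecord Prod.snd (L s, h s)).take t).map
          fun z => (z.1.1, z.1.2, if z.2 then (1 : ℝ) else 0) := by
    rw [List.map_take, List.map_ofFn]
    rfl
  simp only [iidLossWeight, medProb, trajWeight, fullStep, mediatorChoice, history,
    prod_mul_distrib]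

lemma learnerLoss_iidLossWeight [DecidableEq X] (halg : ∀ t l, alg t l ∈ stdSimplex ℝ ι)
    (hθ : ∀ i, θ i ∈ stdSimplex ℝ X) (p : X → ℝ) :
    learnerLoss alg θ (iidLossWeight p T)
      = trajMean (banditStep Prod.snd (mediatorChoice alg θ) p) id
          fun z : Fin T → (ι × X) × Bool => ∑ t, ∑ a, θ (z t).1.1 a * p a := by
  rw [← trajMean_fullStep_loss (fun t l => (mediatorChoice_mem_stdSimplex halg hθ t l).2)
    (fun a : ι × X => θ a.1) T]
  simp only [learnerLoss, trajMean, mul_sum (univ : Finset (Fin T → ι × X)),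
    ← mul_assoc (iidLossWeight _ _ _), iidLossWeight_mul_medProb]
  rw [← Fintype.sum_prod_type', ← (Equiv.arrowProdEquivProdArrow (Fin T) (fun _ => X → Bool)
    fun _ => ι × X).sum_comp]
  rfl

lemma learnerLoss_sub_policyLoss_loweredMean [DecidableEq X]
    (halg : ∀ t l, alg t l ∈ stdSimplex ℝ ι) (hθ : ∀ i, θ i ∈ stdSimplex ℝ X) (Δ : ℝ) (x : X)
    (i : ι) :
    learnerLoss alg θ (iidLossWeight (loweredMean Δ x) T)
        - policyLoss θ (iidLossWeight (loweredMean Δ x) T) i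
      = Δ * trajMean (banditStep Prod.snd (mediatorChoice alg θ) (loweredMean Δ x)) id
          fun z : Fin T → (ι × X) × Bool => ∑ t, (θ i x - θ (z t).1.1 x) := by
  have total := sum_trajWeight (obs := id) (sum_banditStep (arm := Prod.snd)
    (p := loweredMean Δ x) fun t l => (mediatorChoice_mem_stdSimplex halg hθ t l).2) T
  rw [learnerLoss_iidLossWeight halg hθ, policyLoss_iidLossWeight]
  simp only [sum_mul_loweredMean (hθ _).2, trajMean, sum_sub_distrib, ← mul_sum, mul_sub,
    ← sum_mul, total, sum_const, card_univ, Fintype.card_fin, nsmul_eq_mul, one_mul,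
    mul_left_comm _ Δ]
  ring

end MediatorFeedback

section EpsGreedy

variable {N T : ℕ} {ε : ℝ}

lemma epsGreedy_mem_stdSimplex [NeZero N] (hε : ε ∈ Set.Icc (0 : ℝ) 1) (i : Fin N) :
    epsGreedy N ε i ∈ stdSimplex ℝ (Fin N) := by
  have hN : (N : ℝ) ≠ 0 := NeZero.ne _
  have uniform_nonneg : 0 ≤ (1 - ε) / N := div_nonneg (sub_nonneg.2 hε.2) N.cast_nonneg
  constructor
  · intro x
    exact add_nonneg uniform_nonneg (by split_ifs <;> simp [hε.1])
  · simp only [epsGreedy, sum_add_distrib, sum_const, card_univ, Fintype.card_fin, nsmul_eq_mul,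
      sum_ite_eq', mem_univ, if_true, mul_div_cancel₀ _ hN]
    ring

lemma epsGreedy_self_sub (i j : Fin N) :
    epsGreedy N ε i i - epsGreedy N ε j i = ε * (1 - if j = i then 1 else 0) := by
  obtain rfl | h := eq_or_ne j i
  · simp
  · simp [epsGreedy, h, h.symm]

lemma exists_le_learnerLoss_sub_policyLoss (hN : 2 ≤ N) (hε : ε ∈ Set.Icc (0 : ℝ) 1)
    {alg : ℕ → List (Fin N × Fin N × ℝ) → Fin N → ℝ}
    (halg : ∀ t l, alg t l ∈ stdSimplex ℝ (Fin N)) {Δ : ℝ} (h0 : 0 ≤ Δ) (h1 : Δ < 1 / 2)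
    (hT : 0 < T) (hKL : T * bernoulliKL (1 / 2) (1 / 2 - Δ) ≤ N / 8) :
    ∃ i, ε * (Δ * T / 4)
      ≤ learnerLoss alg (epsGreedy N ε) (iidLossWeight (loweredMean Δ i) T)
        - policyLoss (epsGreedy N ε) (iidLossWeight (loweredMean Δ i) T) i := by
  have : NeZero N := ⟨by lia⟩
  have hθ := epsGreedy_mem_stdSimplex (N := N) hε
  have hc := mediatorChoice_mem_stdSimplex halg hθ
  obtain ⟨i, hi⟩ := exists_trajMean_visitCount_le (arm := Prod.snd) (by simpa using hN) hc
    (abs_lt.2 ⟨by linarith, h1⟩) hT (by simpa using hKL) fun z => z.1.1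
  refine ⟨i, ?_⟩
  have total := sum_trajWeight (obs := id) (sum_banditStep (arm := Prod.snd)
    (p := loweredMean Δ i) fun t l => (hc t l).2) T
  rw [learnerLoss_sub_policyLoss_loweredMean halg hθ]
  simp only [trajMean, visitCount] at hi
  simp only [epsGreedy_self_sub, trajMean, ← mul_sum, sum_sub_distrib, mul_left_comm _ ε, mul_sub,
    ← sum_mul, total, sum_const, card_univ, Fintype.card_fin, nsmul_eq_mul, one_mul, mul_one]
  have := mul_le_mul_of_nonneg_left hi (mul_nonneg hε.1 h0)
  linarith

lemma log_four_thirds_le : Real.log (4 / 3) ≤ 81 / 256 := by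
  rw [Real.log_le_iff_le_exp (by norm_num)]
  refine le_trans ?_ (Real.quadratic_le_exp_of_nonneg (by norm_num))
  norm_num

/- The gap is `Δ = √(N / (T * log (4 / 3))) / 8`: the lower bound on `T` says `Δ ≤ 1 / 4`, and
`8 * log (4 / 3) * Δ ^ 2 = N / (8 * T)`. The constant 18 comes from
`Δ * T / 4 = √(N * T) / (32 * √(log (4 / 3)))` and `√(log (4 / 3)) ≤ 9 / 16`. -/
lemma exists_gap {N T : ℝ} (hN : 0 < N) (hT : N / (4 * Real.log (4 / 3)) ≤ T) :
    ∃ Δ, 0 ≤ Δ ∧ Δ ≤ 1 / 4 ∧ T * bernoulliKL (1 / 2) (1 / 2 - Δ) ≤ N / 8 ∧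
      √(N * T) / 18 ≤ Δ * T / 4 := by
  have hlog : 0 < Real.log (4 / 3) := Real.log_pos (by norm_num)
  have hT0 : 0 < T := (by positivity : 0 < N / (4 * Real.log (4 / 3))).trans_le hT
  set ρ := N / (T * Real.log (4 / 3)) with hρ
  have hρ4 : ρ ≤ 4 := by
    rw [div_le_iff₀ (by positivity)] at hT ⊢
    linarith
  have hsqrt : √ρ ≤ 2 := Real.sqrt_le_iff.2 ⟨by norm_num, by linarith⟩
  refine ⟨√ρ / 8, by positivity, by linarith, ?_, ?_⟩
  · calc T * bernoulliKL (1 / 2) (1 / 2 - √ρ / 8)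
        ≤ T * (8 * Real.log (4 / 3) * (√ρ / 8) ^ 2) := by
          gcongr
          exact bernoulliKL_half_sub_le (by positivity) (by linarith)
      _ = N / 8 := by
          rw [div_pow, Real.sq_sqrt (by positivity), hρ]
          field_simp
  · have hprod : N * T ≤ (9 / 16 * √ρ * T) ^ 2 := by
      calc N * T = Real.log (4 / 3) * (ρ * T ^ 2) := by rw [hρ]; field_simp
        _ ≤ 81 / 256 * (ρ * T ^ 2) := by gcongr; exact log_four_thirds_le
        _ = (9 / 16 * √ρ * T) ^ 2 := by
          rw [mul_pow, mul_pow, Real.sq_sqrt (by positivity)]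
          ring
    have := Real.sqrt_le_iff.2 ⟨by positivity, hprod⟩
    linarith

end EpsGreedy

/-- Mediator-feedback lower bound for the ε-greedy policy set: for any
algorithm and `T ≥ N/(4 log(4/3))`, there is a (stochastic, Boolean-valued) sequence of
losses, given by a distribution `w` over loss sequences, with expected regret at least
`(ε/18)·√(N·T)`. -/
theorem epsGreedy_lower_bound (N : ℕ) [NeZero N] (hN : 2 ≤ N)
    (ε : ℝ) (hε : ε ∈ Set.Icc (0 : ℝ) 1)
    (T : ℕ) (hT : (N : ℝ) / (4 * Real.log (4 / 3)) ≤ (T : ℝ))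
    (alg : ℕ → List (Fin N × Fin N × ℝ) → Fin N → ℝ)
    (halg : ∀ t l, (∀ i, 0 ≤ alg t l i) ∧ ∑ i, alg t l i = 1) :
    ∃ w : (Fin T → Fin N → Bool) → ℝ, (∀ L, 0 ≤ w L) ∧ (∑ L, w L = 1) ∧
      ε / 18 * Real.sqrt (N * T)
        ≤ (∑ L, w L * ∑ h : Fin T → Fin N × Fin N,
              medProb alg (epsGreedy N ε) L h *
                ∑ t : Fin T, ∑ a, epsGreedy N ε (h t).1 a *
                  (if L t a then (1 : ℝ) else 0))
          - univ.inf' univ_nonempty (fun i : Fin N =>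
              ∑ L, w L * ∑ t : Fin T, ∑ a, epsGreedy N ε i a *
                (if L t a then (1 : ℝ) else 0)) := by
  have hN0 : (0 : ℝ) < N := mod_cast NeZero.pos N
  have hT0 : (0 : ℝ) < T :=
    (div_pos hN0 (mul_pos four_pos (Real.log_pos (by norm_num)))).trans_le hT
  obtain ⟨Δ, h0, h1, hKL, hgap⟩ := exists_gap hN0 hT
  obtain ⟨i, hi⟩ := exists_le_learnerLoss_sub_policyLoss hN hε halg h0 (by linarith)
    (mod_cast hT0) hKL
  have hΔ : |Δ| < 1 / 2 := abs_lt.2 ⟨by linarith, by linarith⟩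
  have hw := iidLossWeight_mem_stdSimplex (fun x => Set.Ioo_subset_Icc_self
    (loweredMean_mem_Ioo hΔ i x)) T
  refine ⟨iidLossWeight (loweredMean Δ i) T, hw.1, hw.2, ?_⟩
  calc ε / 18 * √(N * T) = ε * (√(N * T) / 18) := by ring
    _ ≤ ε * (Δ * T / 4) := mul_le_mul_of_nonneg_left hgap hε.1
    _ ≤ _ := hi
    _ ≤ _ := sub_le_sub_left (inf'_le _ (mem_univ i)) _

end
end

section
/- Consider the linear bandit problem with action set the ε-greedy policy set (ε > 0) embedded in the simplex, where losses of outcomes are ℓ_t(x) = μ(x) + Z_t with Z_t i.i.d. N(0, σ²), and the learner observes ⟨ϑ_t, μ⟩ + Z_t. Then for any algorithm and T ≥ σ²N/ε², there is an environment μ with sup_μ Reg(μ) ≥ (σ/8)√(NT), independent of ε. -/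
open Finset MeasureTheory ProbabilityTheory

noncomputable section

/-- The history available before round `t` under linear bandit feedback: the actions
played and the observed losses `⟨θ_{a s}, μ⟩ + z s`, where `z` is the common Gaussian
noise sequence. -/
def linHist {N : ℕ} {T : ℕ} (θ : Fin N → Fin N → ℝ) (μ : Fin N → ℝ)
    (a : Fin T → Fin N) (z : Fin T → ℝ) (t : ℕ) : List (Fin N × ℝ) :=
  (List.ofFn fun s : Fin T => (a s, (∑ x, θ (a s) x * μ x) + z s)).take t

/-!
Let `m` be constant and let `m_k` be `m` with arm `k` lowered by `δ`. The action of a round is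
chosen before the noise of that round is drawn, so the relative entropy of the trajectories under
`m` and `m_k` is `δ² / (2σ²)` times the expected number of plays of arm `k` under `m`. By the
Donsker–Varadhan inequality and Hoeffding's lemma, passing from `m` to `m_k` increases the expected
frequency of arm `k` by at most this relative entropy plus `1/8`. Under `m` the frequencies of the
`N` arms sum to `1`, so for `δ = (σ/2) √(N/T)` some arm `k` is played in at most `3/4` of the
rounds under `m_k`, and each other round costs `δ`.

The ε-greedy policies multiply a gap `s` between outcomes by `ε`. The learner observes only the
contracted gap `δ = ε s` and its regret is counted in the same `δ`, so `ε` cancels as soon as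
`s = δ/ε ≤ 1`.
-/

open InformationTheory

section ChangeOfMeasure

variable {Ω : Type*} [MeasurableSpace Ω]

theorem llr_withDensity_exp (Q : Measure Ω) [SigmaFinite Q] {L : Ω → ℝ} (hL : Measurable L) :
    llr (Q.withDensity fun ω => ENNReal.ofReal (Real.exp (L ω))) Q =ᵐ[Q] L := by
  filter_upwards [Q.rnDeriv_withDensity (f := fun ω => ENNReal.ofReal (Real.exp (L ω)))
    (by fun_prop)] with ω hω
  rw [llr, hω, ENNReal.toReal_ofReal (Real.exp_pos _).le, Real.log_exp]

variable {P Q : Measure Ω} [IsProbabilityMeasure P] [IsProbabilityMeasure Q]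

/-- The Donsker–Varadhan inequality: Gibbs' inequality for `P` against `Q` tilted by `f`. -/
theorem integral_le_toReal_klDiv_add_log_integral_exp {f : Ω → ℝ} (hPQ : klDiv P Q ≠ ⊤)
    (hfP : Integrable f P) (hfQ : Integrable (fun ω => Real.exp (f ω)) Q) :
    ∫ ω, f ω ∂P ≤ (klDiv P Q).toReal + Real.log (∫ ω, Real.exp (f ω) ∂Q) := by
  obtain ⟨hac, hint⟩ := klDiv_ne_top_iff.mp hPQ
  have : IsProbabilityMeasure (Q.tilted f) := isProbabilityMeasure_tilted hfQ
  have gibbs := integral_llr_add_sub_measure_univ_nonneg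
    (hac.trans (absolutelyContinuous_tilted hfQ)) (integrable_llr_tilted_right hac hfP hint hfQ)
  rw [integral_llr_tilted_right hac hfP hfQ hint, probReal_univ, probReal_univ] at gibbs
  rw [toReal_klDiv_of_measure_eq hac (by simp)]
  linarith

theorem integral_le_integral_add_toReal_klDiv_add {X : Ω → ℝ} {lo hi : ℝ} (hPQ : klDiv P Q ≠ ⊤)
    (hX : AEMeasurable X Q) (hXmem : ∀ᵐ ω ∂Q, X ω ∈ Set.Icc lo hi) :
    ∫ ω, X ω ∂Q ≤ ∫ ω, X ω ∂P + (klDiv P Q).toReal + (hi - lo) ^ 2 / 8 := by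
  have hac : P ≪ Q := (klDiv_ne_top_iff.mp hPQ).1
  have hXP : Integrable X P := .of_mem_Icc lo hi (hX.mono_ac hac) (hac.ae_le hXmem)
  have subgaussian := hasSubgaussianMGF_of_mem_Icc hX hXmem
  have cgf_le : Real.log (∫ ω, Real.exp (-1 * (X ω - ∫ ω, X ω ∂Q)) ∂Q) ≤ (hi - lo) ^ 2 / 8 := by
    refine (subgaussian.cgf_le (-1)).trans_eq ?_
    simp only [NNReal.coe_pow, NNReal.coe_div, coe_nnnorm, Real.norm_eq_abs, div_pow, sq_abs,
      NNReal.coe_ofNat]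
    ring
  have variational := integral_le_toReal_klDiv_add_log_integral_exp hPQ
    ((hXP.sub (integrable_const (∫ ω, X ω ∂Q))).const_mul (-1))
    (subgaussian.integrable_exp_mul (-1))
  simp only [Pi.sub_apply] at variational
  rw [integral_const_mul, integral_sub hXP (integrable_const _), integral_const, probReal_univ,
    one_smul] at variational
  linarith

theorem klDiv_eq_integral_of_eq_withDensity_exp {L : Ω → ℝ} (hL : Measurable L)
    (hPQ : P = Q.withDensity fun ω => ENNReal.ofReal (Real.exp (L ω))) (hLP : Integrable L P) :
    klDiv P Q = ENNReal.ofReal (∫ ω, L ω ∂P) := by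
  have hac : P ≪ Q := hPQ ▸ withDensity_absolutelyContinuous Q _
  have hllr : llr P Q =ᵐ[P] L := hac.ae_le (hPQ ▸ llr_withDensity_exp Q hL)
  rw [klDiv_of_ac_of_integrable hac (hLP.congr hllr.symm), integral_congr_ae hllr]
  simp

end ChangeOfMeasure

section Density

theorem withDensity_map {α β : Type*} [MeasurableSpace α] [MeasurableSpace β] (μ : Measure α)
    {g : α → β} (hg : Measurable g) {f : β → ENNReal} (hf : Measurable f) :
    (μ.map g).withDensity f = (μ.withDensity (f ∘ g)).map g := by
  ext s hs
  rw [withDensity_apply _ hs, Measure.map_apply hg hs, withDensity_apply _ (hg hs),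
    setLIntegral_map hs hf hg]
  rfl

variable {κ : Type*} [Fintype κ]

theorem pi_withDensity {E : κ → Type*} [∀ i, MeasurableSpace (E i)] (μ : ∀ i, Measure (E i))
    [∀ i, IsProbabilityMeasure (μ i)] {f : ∀ i, E i → ENNReal} (hf : ∀ i, Measurable (f i))
    [∀ i, SigmaFinite ((μ i).withDensity (f i))] :
    Measure.pi (fun i => (μ i).withDensity (f i)) =
      (Measure.pi μ).withDensity fun x => ∏ i, f i (x i) := by
  refine Measure.pi_eq fun s hs => ?_
  have hbox : MeasurableSet (Set.univ.pi s) := .univ_pi hs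
  have hfs (i : κ) : Measurable ((s i).indicator (f i)) := (hf i).indicator (hs i)
  have indicator_eq_prod (x : ∀ i, E i) :
      (Set.univ.pi s).indicator (fun x => ∏ i, f i (x i)) x =
        ∏ i, (s i).indicator (f i) (x i) := by
    by_cases hx : x ∈ Set.univ.pi s
    · rw [Set.indicator_of_mem hx]
      exact prod_congr rfl fun i _ => (Set.indicator_of_mem (hx i trivial) _).symm
    · obtain ⟨i, hi⟩ : ∃ i, x i ∉ s i := by simpa [Set.mem_pi] using hx
      rw [Set.indicator_of_notMem hx,
        prod_eq_zero (mem_univ i) (Set.indicator_of_notMem hi _)]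
  calc (Measure.pi μ).withDensity (fun x => ∏ i, f i (x i)) (Set.univ.pi s)
      = ∫⁻ x, ∏ i, (s i).indicator (f i) (x i) ∂Measure.pi μ := by
        rw [withDensity_apply _ hbox, ← lintegral_indicator hbox]
        exact lintegral_congr indicator_eq_prod
    _ = ∏ i, ∫⁻ x, (s i).indicator (f i) (x i) ∂Measure.pi μ :=
        lintegral_prod_eq_prod_lintegral_of_indepFun univ _
          (iIndepFun_pi fun i => (hfs i).aemeasurable)
          fun i => (hfs i).comp (measurable_pi_apply i)
    _ = ∏ i, (μ i).withDensity (f i) (s i) := by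
        refine prod_congr rfl fun i _ => ?_
        rw [(measurePreserving_eval μ i).lintegral_comp (hfs i), lintegral_indicator (hs i),
          withDensity_apply _ (hs i)]

theorem gaussianReal_eq_withDensity (c c' : ℝ) {v : NNReal} (hv : v ≠ 0) :
    gaussianReal c v = (gaussianReal c' v).withDensity fun y =>
      ENNReal.ofReal (Real.exp (((y - c') ^ 2 - (y - c) ^ 2) / (2 * v))) := by
  rw [gaussianReal_of_var_ne_zero _ hv, gaussianReal_of_var_ne_zero _ hv,
    ← withDensity_mul _ (measurable_gaussianPDF _ _) (by fun_prop)]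
  congr 1
  funext y
  simp only [Pi.mul_apply, gaussianPDF, gaussianPDFReal]
  rw [← ENNReal.ofReal_mul (by positivity), mul_assoc (√_)⁻¹, ← Real.exp_add]
  congr 3
  ring

theorem pi_gaussianReal_eq_withDensity (c c' : κ → ℝ) {v : NNReal} (hv : v ≠ 0) :
    Measure.pi (fun i => gaussianReal (c i) v) =
      (Measure.pi fun i => gaussianReal (c' i) v).withDensity fun y =>
        ENNReal.ofReal (Real.exp (∑ i, ((y i - c' i) ^ 2 - (y i - c i) ^ 2) / (2 * v))) := by
  have hdensity (i : κ) := gaussianReal_eq_withDensity (c i) (c' i) hv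
  have (i : κ) : SigmaFinite ((gaussianReal (c' i) v).withDensity fun y =>
      ENNReal.ofReal (Real.exp (((y - c' i) ^ 2 - (y - c i) ^ 2) / (2 * v)))) := by
    rw [← hdensity]; infer_instance
  simp_rw [hdensity]
  rw [pi_withDensity _ fun i => by fun_prop]
  simp_rw [Real.exp_sum, ENNReal.ofReal_prod_of_nonneg fun _ _ => (Real.exp_pos _).le]

theorem pi_gaussianReal_map_add (c : κ → ℝ) (v : NNReal) :
    (Measure.pi fun _ => gaussianReal 0 v).map (fun z => c + z) =
      Measure.pi fun i => gaussianReal (c i) v := by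
  refine (measurePreserving_pi (fun _ => gaussianReal 0 v) (fun i => gaussianReal (c i) v)
    (f := fun i x => c i + x) fun i => ⟨by fun_prop, ?_⟩).map_eq
  rw [gaussianReal_map_const_add, zero_add]

end Density

section Reflection

theorem integral_mul_eval_pi_eq_zero {κ : Type*} [Fintype κ] [DecidableEq κ] (ρ : κ → Measure ℝ)
    [∀ j, SigmaFinite (ρ j)] (i : κ) [(ρ i).IsNegInvariant] {G : (κ → ℝ) → ℝ} (hG : Measurable G)
    (hGi : ∀ z x, G (Function.update z i x) = G z) :
    ∫ z, G z * z i ∂Measure.pi ρ = 0 := by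
  have reflection :
      MeasurePreserving (fun z => Function.update z i (-z i)) (Measure.pi ρ) (Measure.pi ρ) := by
    convert measurePreserving_pi ρ ρ (f := fun j => if j = i then Neg.neg else id) fun j => ?_
      using 2 with z
    · ext j
      by_cases hj : j = i
      · subst hj; simp
      · simp [hj]
    · split_ifs with hj
      · subst hj; exact Measure.measurePreserving_neg _
      · exact .id _
  have integral_reflected := integral_map (μ := Measure.pi ρ) (f := fun z => G z * z i)
    reflection.measurable.aemeasurable (hG.mul (measurable_pi_apply i)).aestronglyMeasurable
  rw [reflection.map_eq] at integral_reflected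
  simp only [hGi, Function.update_self, mul_neg, integral_neg] at integral_reflected
  linarith

theorem isNegInvariant_gaussianReal_zero (v : NNReal) : (gaussianReal 0 v).IsNegInvariant :=
  ⟨by rw [Measure.neg, gaussianReal_map_neg, neg_zero]⟩

end Reflection

section Policy

variable {ι : Type*} {T : ℕ}

/-- The probability that the algorithm `alg` plays the actions `a` when it is fed the losses `y`.
`alg t h` is the distribution of the action in round `t` after the history `h` of pairs
(action, observed loss). -/
def playProb (alg : ℕ → List (ι × ℝ) → ι → ℝ) (a : Fin T → ι) (y : Fin T → ℝ) : ℝ :=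
  ∏ t : Fin T, alg t ((List.ofFn fun s => (a s, y s)).take t) (a t)

/-- The algorithm that behaves like `alg` after a first round with outcome `o`. -/
def afterFirst (alg : ℕ → List (ι × ℝ) → ι → ℝ) (o : ι × ℝ) : ℕ → List (ι × ℝ) → ι → ℝ :=
  fun t h => alg (t + 1) (o :: h)

theorem playProb_succ (alg : ℕ → List (ι × ℝ) → ι → ℝ) (a : Fin (T + 1) → ι)
    (y : Fin (T + 1) → ℝ) :
    playProb alg a y =
      alg 0 [] (a 0) * playProb (afterFirst alg (a 0, y 0)) (Fin.tail a) (Fin.tail y) := by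
  simp only [playProb, afterFirst, Fin.tail, Fin.prod_univ_succ, List.ofFn_succ, Fin.val_zero,
    List.take_zero, Fin.val_succ, List.take_succ_cons]

variable [Fintype ι] {alg : ℕ → List (ι × ℝ) → ι → ℝ}

theorem afterFirst_mem_stdSimplex (halg : ∀ t h, alg t h ∈ stdSimplex ℝ ι) (o : ι × ℝ) (t : ℕ)
    (h : List (ι × ℝ)) : afterFirst alg o t h ∈ stdSimplex ℝ ι :=
  halg (t + 1) (o :: h)

theorem playProb_nonneg (halg : ∀ t h, alg t h ∈ stdSimplex ℝ ι) (a : Fin T → ι)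
    (y : Fin T → ℝ) : 0 ≤ playProb alg a y :=
  prod_nonneg fun _ _ => (halg _ _).1 _

theorem playProb_le_one (halg : ∀ t h, alg t h ∈ stdSimplex ℝ ι) (a : Fin T → ι)
    (y : Fin T → ℝ) : playProb alg a y ≤ 1 :=
  prod_le_one (fun _ _ => (halg _ _).1 _) fun _ _ =>
    (mem_Icc_of_mem_stdSimplex (halg _ _) _).2

theorem sum_playProb_succ (m : ι → ℝ) (z : Fin (T + 1) → ℝ) (f : (Fin (T + 1) → ι) → ℝ) :
    ∑ a, playProb alg a (m ∘ a + z) * f a =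
      ∑ i, alg 0 [] i * ∑ a, playProb (afterFirst alg (i, m i + z 0)) a (m ∘ a + Fin.tail z) *
        f (Fin.cons i a) := by
  rw [← (Fin.consEquiv fun _ => ι).sum_comp, Fintype.sum_prod_type]
  refine sum_congr rfl fun i _ => ?_
  rw [mul_sum]
  refine sum_congr rfl fun a _ => ?_
  rw [playProb_succ]
  exact mul_assoc _ _ _

theorem sum_playProb_eq_one (halg : ∀ t h, alg t h ∈ stdSimplex ℝ ι) (m : ι → ℝ)
    (z : Fin T → ℝ) : ∑ a : Fin T → ι, playProb alg a (m ∘ a + z) = 1 := by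
  induction T generalizing alg with
  | zero => simp [playProb]
  | succ T ih =>
    have h := sum_playProb_succ (alg := alg) m z fun _ => 1
    simp only [mul_one] at h
    rw [h, ← (halg 0 []).2]
    refine sum_congr rfl fun i _ => ?_
    rw [ih (afterFirst_mem_stdSimplex halg _), mul_one]

theorem sum_playProb_mul_eval_congr (halg : ∀ t h, alg t h ∈ stdSimplex ℝ ι) (m : ι → ℝ)
    (g : ι → ℝ) (t : Fin T) {z z' : Fin T → ℝ} (hz : ∀ s < t, z s = z' s) :
    ∑ a : Fin T → ι, playProb alg a (m ∘ a + z) * g (a t) =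
      ∑ a : Fin T → ι, playProb alg a (m ∘ a + z') * g (a t) := by
  induction T generalizing alg with
  | zero => exact t.elim0
  | succ T ih =>
    simp only [sum_playProb_succ m _ fun a => g (a t)]
    refine sum_congr rfl fun i _ => congrArg _ ?_
    cases t using Fin.cases with
    | zero =>
      simp only [Fin.cons_zero, ← sum_mul,
        sum_playProb_eq_one (afterFirst_mem_stdSimplex halg _)]
    | succ t =>
      simp only [Fin.cons_succ]
      rw [hz 0 t.succ_pos]
      exact ih (afterFirst_mem_stdSimplex halg _) t fun s hs =>
        hz s.succ (Fin.succ_lt_succ_iff.mpr hs)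

end Policy

section TrajectoryLaw

variable {ι : Type*} [MeasurableSpace ι] {T : ℕ}

/-- The law of the trajectory (actions, observed losses) over `T` rounds when `alg` plays a bandit
whose arm `i` has loss `m i` plus centred Gaussian noise of variance `v`. It is encoded by its
density `playProb` with respect to the sum over all action sequences `a` of the laws of the losses
along `a`, so that `alg t` need not be a measurable kernel for each `t`. -/
def trajLaw (alg : ℕ → List (ι × ℝ) → ι → ℝ) (m : ι → ℝ) (v : NNReal) :
    Measure ((Fin T → ι) × (Fin T → ℝ)) :=
  (Measure.sum fun a : Fin T → ι =>
    (Measure.pi fun _ => gaussianReal 0 v).map fun z => (a, m ∘ a + z)).withDensity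
      fun ω => ENNReal.ofReal (playProb alg ω.1 ω.2)

/-- The log-likelihood ratio of a trajectory under arm means `m` against arm means `m'`. -/
def trajLLR (m m' : ι → ℝ) (v : NNReal) (ω : (Fin T → ι) × (Fin T → ℝ)) : ℝ :=
  ∑ t, ((ω.2 t - m' (ω.1 t)) ^ 2 - (ω.2 t - m (ω.1 t)) ^ 2) / (2 * v)

variable [MeasurableSingletonClass ι] {alg : ℕ → List (ι × ℝ) → ι → ℝ} (m m' : ι → ℝ) {v : NNReal}

theorem measurableEmbedding_trajectory (a : Fin T → ι) :
    MeasurableEmbedding fun z : Fin T → ℝ => (a, m ∘ a + z) :=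
  (measurableEmbedding_prodMk_left a).comp (measurableEmbedding_addLeft (m ∘ a))

theorem measurable_trajLLR [Countable ι] :
    Measurable (trajLLR m m' v : (Fin T → ι) × (Fin T → ℝ) → ℝ) :=
  measurable_from_prod_countable_right fun a => by unfold trajLLR; fun_prop

theorem measurable_ofReal_playProb [Countable ι]
    (hmeas : ∀ a : Fin T → ι, Measurable (playProb alg a)) :
    Measurable fun ω : (Fin T → ι) × (Fin T → ℝ) => ENNReal.ofReal (playProb alg ω.1 ω.2) :=
  (measurable_from_prod_countable_right hmeas).ennreal_ofReal

theorem map_trajectory_eq_withDensity [Countable ι] (hv : v ≠ 0) (a : Fin T → ι) :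
    (Measure.pi fun _ => gaussianReal 0 v).map (fun z => (a, m ∘ a + z)) =
      ((Measure.pi fun _ => gaussianReal 0 v).map fun z => (a, m' ∘ a + z)).withDensity
        fun ω => ENNReal.ofReal (Real.exp (trajLLR m m' v ω)) := by
  have map_eq (m : ι → ℝ) : (Measure.pi fun _ => gaussianReal 0 v).map (fun z => (a, m ∘ a + z)) =
      (Measure.pi fun t => gaussianReal (m (a t)) v).map (Prod.mk a) := by
    rw [← pi_gaussianReal_map_add (fun t => m (a t)), Measure.map_map (by fun_prop) (by fun_prop)]
    rfl
  rw [map_eq m, map_eq m', pi_gaussianReal_eq_withDensity _ (fun t => m' (a t)) hv,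
    withDensity_map _ (by fun_prop) (measurable_trajLLR m m').exp.ennreal_ofReal]
  rfl

theorem trajLaw_eq_withDensity [Countable ι]
    (hmeas : ∀ a : Fin T → ι, Measurable (playProb alg a)) (hv : v ≠ 0) :
    (trajLaw alg m v : Measure ((Fin T → ι) × (Fin T → ℝ))) =
      (trajLaw alg m' v).withDensity fun ω => ENNReal.ofReal (Real.exp (trajLLR m m' v ω)) := by
  have hLLR := (measurable_trajLLR (T := T) m m' (v := v)).exp.ennreal_ofReal
  have hplay := measurable_ofReal_playProb hmeas
  simp_rw [trajLaw, map_trajectory_eq_withDensity m m' hv]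
  rw [← withDensity_sum, ← withDensity_mul _ hLLR hplay, ← withDensity_mul _ hplay hLLR, mul_comm]

variable [Fintype ι] (halg : ∀ t h, alg t h ∈ stdSimplex ℝ ι)
  (hmeas : ∀ a : Fin T → ι, Measurable (playProb alg a))
include halg hmeas

theorem integrable_trajLaw_iff {f : (Fin T → ι) × (Fin T → ℝ) → ℝ} :
    Integrable f (trajLaw alg m v) ↔ ∀ a, Integrable
      (fun z => playProb alg a (m ∘ a + z) * f (a, m ∘ a + z))
      (Measure.pi fun _ => gaussianReal 0 v) := by
  rw [trajLaw, integrable_withDensity_iff_integrable_smul' (measurable_ofReal_playProb hmeas)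
    (by simp), Measure.sum_fintype, integrable_finsetSum_measure]
  refine forall_congr' fun a => ?_
  simp only [mem_univ, forall_const, (measurableEmbedding_trajectory m a).integrable_map_iff,
    ENNReal.toReal_ofReal (playProb_nonneg halg _ _), smul_eq_mul]
  rfl

theorem integral_trajLaw {f : (Fin T → ι) × (Fin T → ℝ) → ℝ}
    (hf : Integrable f (trajLaw alg m v)) :
    ∫ ω, f ω ∂trajLaw alg m v =
      ∫ z, ∑ a, playProb alg a (m ∘ a + z) * f (a, m ∘ a + z)
        ∂Measure.pi fun _ => gaussianReal 0 v := by
  have hplay := measurable_ofReal_playProb hmeas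
  rw [integral_finsetSum _ fun a _ => (integrable_trajLaw_iff m halg hmeas).mp hf a]
  rw [trajLaw, integrable_withDensity_iff_integrable_smul' hplay (by simp), Measure.sum_fintype,
    integrable_finsetSum_measure] at hf
  rw [trajLaw, integral_withDensity_eq_integral_toReal_smul hplay (by simp), Measure.sum_fintype,
    integral_finsetSum_measure hf]
  simp only [(measurableEmbedding_trajectory m _).integral_map,
    ENNReal.toReal_ofReal (playProb_nonneg halg _ _), smul_eq_mul]

theorem integrable_trajLaw_of_forall {f : (Fin T → ι) × (Fin T → ℝ) → ℝ}
    (hf : ∀ a, Integrable (fun z => f (a, m ∘ a + z)) (Measure.pi fun _ => gaussianReal 0 v)) :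
    Integrable f (trajLaw alg m v) := by
  refine (integrable_trajLaw_iff m halg hmeas).mpr fun a => ?_
  refine (hf a).bdd_mul (c := 1) ((hmeas a).comp (by fun_prop)).aestronglyMeasurable
    (.of_forall fun z => ?_)
  rw [Real.norm_of_nonneg (playProb_nonneg halg _ _)]
  exact playProb_le_one halg _ _

theorem integrable_trajLaw_comp_fst (f : (Fin T → ι) → ℝ) :
    Integrable (fun ω => f ω.1) (trajLaw alg m v) :=
  integrable_trajLaw_of_forall m halg hmeas fun a => integrable_const (f a)

theorem isProbabilityMeasure_trajLaw :
    IsProbabilityMeasure (trajLaw alg m v : Measure ((Fin T → ι) × (Fin T → ℝ))) := by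
  have h := integral_trajLaw m halg hmeas
    (integrable_trajLaw_comp_fst m halg hmeas (v := v) fun _ => 1)
  simp only [mul_one, sum_playProb_eq_one halg, integral_const, smul_eq_mul, probReal_univ] at h
  exact ⟨(ENNReal.toReal_eq_one_iff _).mp h⟩

theorem integrable_noise_trajLaw (g : ι → ℝ) (t : Fin T) :
    Integrable (fun ω => g (ω.1 t) * (ω.2 t - m (ω.1 t))) (trajLaw alg m v) := by
  refine integrable_trajLaw_of_forall m halg hmeas fun a => ?_
  simp only [Pi.add_apply, Function.comp_apply, add_sub_cancel_left]
  exact (integrable_eval (μ := fun _ => gaussianReal 0 v)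
    ((memLp_id_gaussianReal 1).integrable le_rfl)).const_mul _

/-- The action of round `t` is chosen before the noise of round `t` is drawn. -/
theorem integral_noise_trajLaw_eq_zero (g : ι → ℝ) (t : Fin T) :
    ∫ ω, g (ω.1 t) * (ω.2 t - m (ω.1 t)) ∂trajLaw alg m v = 0 := by
  have := isNegInvariant_gaussianReal_zero v
  rw [integral_trajLaw m halg hmeas (integrable_noise_trajLaw m halg hmeas g t)]
  simp only [Pi.add_apply, Function.comp_apply, add_sub_cancel_left, ← mul_assoc, ← sum_mul]
  refine integral_mul_eval_pi_eq_zero _ t ?_ fun z x => ?_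
  · exact Finset.measurable_sum _ fun a _ => ((hmeas a).comp (by fun_prop)).mul_const _
  · exact sum_playProb_mul_eval_congr halg m g t fun s hs => Function.update_of_ne hs.ne _ _

theorem klDiv_trajLaw (hv : v ≠ 0) :
    klDiv (trajLaw alg m v : Measure ((Fin T → ι) × (Fin T → ℝ))) (trajLaw alg m' v) =
      ENNReal.ofReal (∫ ω, ∑ t, (m (ω.1 t) - m' (ω.1 t)) ^ 2 / (2 * v)
        ∂(trajLaw alg m v : Measure ((Fin T → ι) × (Fin T → ℝ)))) := by
  have := isProbabilityMeasure_trajLaw m halg hmeas (v := v)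
  have := isProbabilityMeasure_trajLaw m' halg hmeas (v := v)
  have trajLLR_eq (ω : (Fin T → ι) × (Fin T → ℝ)) : trajLLR m m' v ω =
      ∑ t, (m (ω.1 t) - m' (ω.1 t)) / v * (ω.2 t - m (ω.1 t)) +
        ∑ t, (m (ω.1 t) - m' (ω.1 t)) ^ 2 / (2 * v) := by
    rw [trajLLR, ← sum_add_distrib]
    exact sum_congr rfl fun t _ => by field_simp; ring
  have noise_integrable (t : Fin T) :=
    integrable_noise_trajLaw m halg hmeas (v := v) (fun i => (m i - m' i) / v) t
  have noise_sum_integrable := integrable_finsetSum univ fun t _ => noise_integrable t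
  have drift_integrable := integrable_trajLaw_comp_fst m halg hmeas (v := v)
    fun a => ∑ t, (m (a t) - m' (a t)) ^ 2 / (2 * v)
  rw [klDiv_eq_integral_of_eq_withDensity_exp (measurable_trajLLR m m')
    (trajLaw_eq_withDensity m m' hmeas hv)
    ((noise_sum_integrable.add drift_integrable).congr (.of_forall fun ω => (trajLLR_eq ω).symm))]
  simp_rw [trajLLR_eq]
  rw [integral_add noise_sum_integrable drift_integrable,
    integral_finsetSum _ fun t _ => noise_integrable t]
  simp only [integral_noise_trajLaw_eq_zero m halg hmeas fun i => (m i - m' i) / v,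
    sum_const_zero, zero_add]

end TrajectoryLaw

section LowerBound

variable {ι : Type*}

/-- The expected number of rounds in which arm `k` is played when the arms have means `m`. -/
def expPlays [MeasurableSpace ι] [DecidableEq ι] (alg : ℕ → List (ι × ℝ) → ι → ℝ) (T : ℕ)
    (m : ι → ℝ) (v : NNReal) (k : ι) : ℝ :=
  ∫ ω : (Fin T → ι) × (Fin T → ℝ), (#{t | ω.1 t = k} : ℝ) ∂trajLaw alg m v

/-- The arm means that are equal to `b`, except that arm `k` is better by `δ`. -/
def needle [DecidableEq ι] (b δ : ℝ) (k i : ι) : ℝ := b - if i = k then δ else 0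

variable [MeasurableSpace ι] [MeasurableSingletonClass ι] [Fintype ι] {T : ℕ}
  {alg : ℕ → List (ι × ℝ) → ι → ℝ} {v : NNReal} (halg : ∀ t h, alg t h ∈ stdSimplex ℝ ι)
  (hmeas : ∀ a : Fin T → ι, Measurable (playProb alg a))

include halg hmeas

theorem integral_trajLaw_comp_fst_le (m m' : ι → ℝ) (hv : v ≠ 0) {f : (Fin T → ι) → ℝ} {lo hi : ℝ}
    (hf : ∀ a, f a ∈ Set.Icc lo hi) :
    ∫ ω, f ω.1 ∂trajLaw alg m' v ≤ ∫ ω, f ω.1 ∂trajLaw alg m v +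
      ∫ ω : (Fin T → ι) × (Fin T → ℝ), ∑ t, (m (ω.1 t) - m' (ω.1 t)) ^ 2 / (2 * v)
        ∂trajLaw alg m v + (hi - lo) ^ 2 / 8 := by
  have := isProbabilityMeasure_trajLaw m halg hmeas (v := v)
  have := isProbabilityMeasure_trajLaw m' halg hmeas (v := v)
  have hkl := klDiv_trajLaw m m' halg hmeas hv
  have transport := integral_le_integral_add_toReal_klDiv_add (hkl ▸ ENNReal.ofReal_ne_top)
    (integrable_trajLaw_comp_fst m' halg hmeas f).aemeasurable (.of_forall fun ω => hf ω.1)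
  rwa [hkl, ENNReal.toReal_ofReal (integral_nonneg fun ω => by positivity)] at transport

variable [DecidableEq ι]

theorem sum_expPlays (m : ι → ℝ) : ∑ k, expPlays alg T m v k = T := by
  have := isProbabilityMeasure_trajLaw m halg hmeas (v := v)
  have sum_plays (a : Fin T → ι) : ∑ k, (#{t | a t = k} : ℝ) = T := by
    rw [← Nat.cast_sum, ← card_eq_sum_card_fiberwise fun t _ => mem_univ (a t), card_univ,
      Fintype.card_fin]
  simp only [expPlays]
  rw [← integral_finsetSum _ fun k _ => integrable_trajLaw_comp_fst m halg hmeas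
    fun a => (#{t | a t = k} : ℝ)]
  simp [sum_plays]

theorem integral_sum_needle (b δ : ℝ) (k : ι) :
    ∫ ω : (Fin T → ι) × (Fin T → ℝ), ∑ t, needle b δ k (ω.1 t) ∂trajLaw alg (needle b δ k) v =
      T * b - δ * expPlays alg T (needle b δ k) v k := by
  have := isProbabilityMeasure_trajLaw (needle b δ k) halg hmeas (v := v)
  have sum_needle (a : Fin T → ι) : ∑ t, needle b δ k (a t) = T * b - δ * #{t | a t = k} := by
    simp [needle, sum_sub_distrib, sum_ite, mul_comm δ]
  simp only [sum_needle]
  rw [integral_sub (integrable_const _) ((integrable_trajLaw_comp_fst _ halg hmeas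
    fun a => (#{t | a t = k} : ℝ)).const_mul δ), integral_const, probReal_univ, one_smul,
    integral_const_mul, expPlays]

theorem expPlays_needle_le (hv : v ≠ 0) (b δ : ℝ) (k : ι) :
    expPlays alg T (needle b δ k) v k / T ≤
      expPlays alg T (fun _ => b) v k / T + δ ^ 2 / (2 * v) * expPlays alg T (fun _ => b) v k +
        1 / 8 := by
  have hfreq (a : Fin T → ι) : (#{t | a t = k} : ℝ) / T ∈ Set.Icc 0 1 := by
    refine ⟨by positivity, div_le_one_of_le₀ ?_ (by positivity)⟩
    exact_mod_cast (card_le_univ _).trans_eq (Fintype.card_fin T)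
  have gap_sum (a : Fin T → ι) :
      ∑ t, (b - needle b δ k (a t)) ^ 2 / (2 * v) = δ ^ 2 / (2 * v) * #{t | a t = k} := by
    simp [needle, sum_ite, ite_pow, ite_div, mul_comm]
  have transport := integral_trajLaw_comp_fst_le halg hmeas (fun _ => b) (needle b δ k) hv hfreq
  simp only [gap_sum, integral_div, integral_const_mul, sub_zero, one_pow] at transport
  exact transport

theorem exists_expPlays_needle_le (hv : v ≠ 0) (hT : T ≠ 0) (hcard : 2 ≤ Fintype.card ι) (b : ℝ)
    {δ : ℝ} (hδ : 4 * T * δ ^ 2 ≤ v * Fintype.card ι) :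
    ∃ k, expPlays alg T (needle b δ k) v k ≤ 3 / 4 * T := by
  have : Nonempty ι := Fintype.card_pos_iff.mp (by lia)
  have hT' : (0 : ℝ) < T := by positivity
  have hcard' : (2 : ℝ) ≤ Fintype.card ι := by exact_mod_cast hcard
  have information_le : δ ^ 2 / (2 * v) * T ≤ Fintype.card ι / 8 := by
    rw [div_mul_eq_mul_div, div_le_div_iff₀ (by positivity) (by positivity)]
    linarith
  have sum_le : ∑ k, expPlays alg T (needle b δ k) v k / T ≤ ∑ _k : ι, (3 / 4 : ℝ) := calc
    _ ≤ ∑ k, (expPlays alg T (fun _ => b) v k / T +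
          δ ^ 2 / (2 * v) * expPlays alg T (fun _ => b) v k + 1 / 8) :=
        sum_le_sum fun k _ => expPlays_needle_le halg hmeas hv b δ k
    _ = 1 + δ ^ 2 / (2 * v) * T + Fintype.card ι / 8 := by
        rw [sum_add_distrib, sum_add_distrib, ← sum_div, ← mul_sum, sum_expPlays halg hmeas,
          div_self hT'.ne', sum_const, card_univ, nsmul_eq_mul, mul_one_div]
    _ ≤ ∑ _k : ι, (3 / 4 : ℝ) := by
        rw [sum_const, card_univ, nsmul_eq_mul]
        linarith
  obtain ⟨k, -, hk⟩ := exists_le_of_sum_le univ_nonempty sum_le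
  exact ⟨k, (div_le_iff₀ hT').mp hk⟩

theorem exists_regret_needle_ge (hv : v ≠ 0) (hT : T ≠ 0) (hcard : 2 ≤ Fintype.card ι) (b : ℝ)
    {δ : ℝ} (hδ0 : 0 ≤ δ) (hδ : 4 * T * δ ^ 2 ≤ v * Fintype.card ι) :
    ∃ k, δ * T / 4 ≤ ∫ ω : (Fin T → ι) × (Fin T → ℝ), ∑ t, needle b δ k (ω.1 t)
      ∂trajLaw alg (needle b δ k) v - T * needle b δ k k := by
  obtain ⟨k, hk⟩ := exists_expPlays_needle_le halg hmeas hv hT hcard b hδ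
  refine ⟨k, ?_⟩
  rw [integral_sum_needle halg hmeas, needle, if_pos rfl]
  linarith [mul_le_mul_of_nonneg_left hk hδ0]

end LowerBound

section EpsGreedy

theorem sum_epsGreedy_mul (N : ℕ) (ε : ℝ) (i : Fin N) (μ : Fin N → ℝ) :
    ∑ x, epsGreedy N ε i x * μ x = (1 - ε) / N * ∑ x, μ x + ε * μ i := by
  simp [epsGreedy, add_mul, sum_add_distrib, mul_sum]

theorem sum_epsGreedy_mul_needle (N : ℕ) [NeZero N] (ε b s : ℝ) (k i : Fin N) :
    ∑ x, epsGreedy N ε i x * needle b s k x = needle (b - (1 - ε) * s / N) (ε * s) k i := by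
  have hN : (N : ℝ) ≠ 0 := NeZero.ne _
  have sum_needle : ∑ x, needle b s k x = N * b - s := by simp [needle]
  rw [sum_epsGreedy_mul, sum_needle]
  simp only [needle, mul_sub, mul_ite, mul_zero]
  field_simp
  ring

theorem needle_mem_Icc {ι : Type*} [DecidableEq ι] {s : ℝ} (hs : |s| ≤ 1) (k i : ι) :
    needle ((1 + s) / 2) s k i ∈ Set.Icc 0 1 := by
  obtain ⟨hs_ge, hs_le⟩ := abs_le.mp hs
  rw [needle]
  split_ifs <;> constructor <;> linarith

theorem exists_regret_epsGreedy_ge {N T : ℕ} [NeZero N] (hN : 2 ≤ N) (hT : T ≠ 0)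
    {alg : ℕ → List (Fin N × ℝ) → Fin N → ℝ} (halg : ∀ t h, alg t h ∈ stdSimplex ℝ (Fin N))
    (hmeas : ∀ a : Fin T → Fin N, Measurable (playProb alg a)) {v : NNReal} (hv : v ≠ 0)
    {ε s : ℝ} (hs : |s| ≤ 1) (hεs : 0 ≤ ε * s) (hgap : 4 * T * (ε * s) ^ 2 ≤ v * N) :
    ∃ μ : Fin N → ℝ, (∀ x, μ x ∈ Set.Icc 0 1) ∧
      ε * s * T / 4 ≤
        ∫ ω : (Fin T → Fin N) × (Fin T → ℝ), ∑ t, ∑ x, epsGreedy N ε (ω.1 t) x * μ x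
          ∂trajLaw alg (fun i => ∑ x, epsGreedy N ε i x * μ x) v -
        univ.inf' univ_nonempty fun i => T * ∑ x, epsGreedy N ε i x * μ x := by
  obtain ⟨k, hk⟩ := exists_regret_needle_ge halg hmeas hv hT (by simpa using hN)
    ((1 + s) / 2 - (1 - ε) * s / N) hεs (by simpa using hgap)
  refine ⟨needle ((1 + s) / 2) s k, needle_mem_Icc hs k, ?_⟩
  simp only [sum_epsGreedy_mul_needle]
  refine hk.trans (sub_le_sub_left ?_ _)
  exact inf'_le (fun i => T * needle ((1 + s) / 2 - (1 - ε) * s / N) (ε * s) k i) (mem_univ k)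

/-- The choice `ε s = σ / 2 * √(n / T)` makes the gap as large as `T` rounds allow it to stay
undetected; the horizon condition says that `s` then fits into a loss range of length `1`. -/
theorem exists_scale_of_le_horizon {n T σ ε : ℝ} (hn : 0 ≤ n) (hσ : 0 ≤ σ) (hT : 0 < T) (hε : ε ≠ 0)
    (hTε : σ ^ 2 * n / (2 * ε) ^ 2 ≤ T) :
    ∃ s, |s| ≤ 1 ∧ 0 ≤ ε * s ∧ 4 * T * (ε * s) ^ 2 = σ ^ 2 * n ∧
      ε * s * T / 4 = σ / 8 * √(n * T) := by
  have gap_eq : ε * (σ / 2 * √(n / T) / ε) = σ / 2 * √(n / T) := mul_div_cancel₀ _ hε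
  have gap_sq : 4 * T * (σ / 2 * √(n / T)) ^ 2 = σ ^ 2 * n := by
    rw [mul_pow, Real.sq_sqrt (by positivity)]
    field_simp
    ring
  refine ⟨σ / 2 * √(n / T) / ε, ?_, ?_, ?_, ?_⟩
  · rw [← sq_le_one_iff_abs_le_one, div_pow, div_le_one₀ (by positivity)]
    rw [div_le_iff₀ (by positivity), ← gap_sq, mul_comm 4, mul_assoc, mul_le_mul_iff_right₀ hT]
      at hTε
    linarith
  · rw [gap_eq]
    positivity
  · rw [gap_eq, gap_sq]
  · rw [gap_eq, Real.sqrt_div hn, Real.sqrt_mul hn]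
    field_simp
    rw [Real.sq_sqrt hT.le]
    ring

theorem linear_bandit_lower_bound_general (N : ℕ) [NeZero N] (hN : 2 ≤ N)
    (ε : ℝ) (hε : ε ≠ 0)
    (σ : NNReal) (hσ : 0 < σ)
    (T : ℕ) (hT : (σ : ℝ) ^ 2 * N / (2 * ε) ^ 2 ≤ (T : ℝ))
    (alg : ℕ → List (Fin N × ℝ) → Fin N → ℝ)
    (halg : ∀ t l, (∀ i, 0 ≤ alg t l i) ∧ ∑ i, alg t l i = 1)
    (hmeas : ∀ (μ : Fin N → ℝ) (a : Fin T → Fin N),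
      Measurable fun z : Fin T → ℝ =>
        ∏ t : Fin T, alg t (linHist (epsGreedy N ε) μ a z t) (a t)) :
    ∃ μ : Fin N → ℝ, (∀ x, 0 ≤ μ x ∧ μ x ≤ 1) ∧
      (σ : ℝ) / 8 * Real.sqrt (N * T)
        ≤ (∫ z : Fin T → ℝ,
              (∑ a : Fin T → Fin N,
                (∏ t : Fin T, alg t (linHist (epsGreedy N ε) μ a z t) (a t)) *
                  ∑ t : Fin T, ∑ x, epsGreedy N ε (a t) x * μ x)
              ∂(Measure.pi fun _ : Fin T => gaussianReal 0 (σ ^ 2)))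
          - univ.inf' univ_nonempty (fun i : Fin N =>
              (T : ℝ) * ∑ x, epsGreedy N ε i x * μ x) := by
  have hT0 : (0 : ℝ) < T := hT.trans_lt' (by positivity)
  have hplay (a : Fin T → Fin N) : Measurable (playProb alg a) := by
    unfold playProb
    simpa only [linHist, Pi.zero_apply, mul_zero, sum_const_zero, zero_add] using hmeas 0 a
  obtain ⟨s, hs, hεs, hgap, hregret⟩ :=
    exists_scale_of_le_horizon (by positivity) (by positivity) hT0 hε hT
  obtain ⟨μ, hμ, hμ_regret⟩ := exists_regret_epsGreedy_ge (v := σ ^ 2) hN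
    (by exact_mod_cast hT0.ne') halg hplay (by positivity) hs hεs (by simpa using hgap.le)
  refine ⟨μ, hμ, ?_⟩
  rw [hregret, integral_trajLaw _ halg hplay (integrable_trajLaw_comp_fst _ halg hplay
    fun a => ∑ t, ∑ x, epsGreedy N ε (a t) x * μ x)] at hμ_regret
  exact hμ_regret

end EpsGreedy

/-- Linear bandit lower bound for the ε-greedy action set.  Losses are
`ℓ_t(x) = μ x + Z_t` with `Z_t` i.i.d. `N(0,σ²)` noise common to all outcomes, and the
learner observes only `⟨ϑ_t, μ⟩ + Z_t`.  For any (measurable) algorithm and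
`T ≥ σ²N/ε²`, there is an environment `μ ∈ [0,1]^N` whose expected regret is at least
`(σ/8)·√(N·T)` — independently of `ε`. -/
theorem linear_bandit_lower_bound (N : ℕ) [NeZero N] (hN : 2 ≤ N)
    (ε : ℝ) (hε : 0 < ε) (hε1 : ε ≤ 1)
    (σ : NNReal) (hσ : 0 < σ)
    (T : ℕ) (hT : (σ : ℝ) ^ 2 * N / ε ^ 2 ≤ (T : ℝ))
    (alg : ℕ → List (Fin N × ℝ) → Fin N → ℝ)
    (halg : ∀ t l, (∀ i, 0 ≤ alg t l i) ∧ ∑ i, alg t l i = 1)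
    (hmeas : ∀ (μ : Fin N → ℝ) (a : Fin T → Fin N),
      Measurable fun z : Fin T → ℝ =>
        ∏ t : Fin T, alg t (linHist (epsGreedy N ε) μ a z t) (a t)) :
    ∃ μ : Fin N → ℝ, (∀ x, 0 ≤ μ x ∧ μ x ≤ 1) ∧
      (σ : ℝ) / 8 * Real.sqrt (N * T)
        ≤ (∫ z : Fin T → ℝ,
              (∑ a : Fin T → Fin N,
                (∏ t : Fin T, alg t (linHist (epsGreedy N ε) μ a z t) (a t)) *
                  ∑ t : Fin T, ∑ x, epsGreedy N ε (a t) x * μ x)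
              ∂(Measure.pi fun _ : Fin T => gaussianReal 0 (σ ^ 2)))
          - univ.inf' univ_nonempty (fun i : Fin N =>
              (T : ℝ) * ∑ x, epsGreedy N ε i x * μ x) := by
  have horizon_le : (σ : ℝ) ^ 2 * N / (2 * ε) ^ 2 ≤ σ ^ 2 * N / ε ^ 2 := by gcongr; linarith
  exact linear_bandit_lower_bound_general N hN ε hε.ne' σ hσ T (horizon_le.trans hT) alg halg hmeas

end
end
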